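/- arXiv:1811.00248 — 7 statements merged into one kernel-verified Lean document; each statement's English description precedes it below -/
import Mathlib

section
/- For every natural number n: H_{3n}(F(x,3)) = (-1)^n, H_{3n+1}(F(x,3)) = (-1)^n, and H_{3n+2}(F(x,3)) = 0. -/
/-!
The moments `catalanConv 3 k` are written through the tridiagonal operator `M` on sequences
`ℕ → ℤ` with `2` on the diagonal and `1` next to it. The ballot numbers
`ballot i m = binom(2i+1, i+m+1) - binom(2i+1, i+m+2)` are the entries of `Mⁱ e₀`
(`ballot_succ_zero`, `ballot_succ_succ`), and since `M` is symmetric,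
`⟨Mⁱ e₀, Mʲ e₀⟩ = ⟨e₀, Mⁱ⁺ʲ e₀⟩` (`sum_ballot_mul_ballot`). On the other hand
`catalanConv 3 k = ⟨e₀, (M - 1) Mᵏ e₀⟩` (`catalanConv_three`), a difference of two consecutive
Catalan numbers. Hence `catalanConv 3 (i + j) = ⟨Mⁱ e₀, (M - 1) Mʲ e₀⟩`.

Because `ballot` is unitriangular, this identity restricts to `n × n` blocks and says that the
Hankel matrix is `P T Pᵀ`, where `P` is lower unitriangular and `T` is the block of `M - 1`: the
tridiagonal matrix all of whose entries in the band are `1`. So the Hankel determinant is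
`det T`, which satisfies `D (n+2) = D (n+1) - D n` with `D 0 = D 1 = 1` (`det_triOnes`), and this
recurrence is solved by a sequence with `D (n+3) = - D n`.
-/

/-- The Hankel determinant `H_n(a)` of a sequence `a : ℕ → ℤ`: the determinant of the
`n × n` matrix whose `(i,j)` entry is `a (i + j)`.  `H_0 = 1` by convention (empty matrix). -/
def hankel (a : ℕ → ℤ) (n : ℕ) : ℤ :=
  Matrix.det (Matrix.of fun i j : Fin n => a (i.val + j.val))

/-- The `r`-th convolution power of the Catalan numbers:
`C_k^{(r)} = (r/(2k+r)) · binom(2k+r, k)`. -/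
def catalanConv (r : ℕ) (k : ℕ) : ℤ :=
  ((r : ℤ) * ((2 * k + r).choose k : ℤ)) / (2 * k + r)

/-- The ballot numbers `binom(2i+1, i+m+1) - binom(2i+1, i+m+2)`. The symmetric form of the
usual `binom(2i+1, i-m) - binom(2i+1, i-m-1)` is used, as it needs no subtraction of indices. -/
def ballot (i m : ℕ) : ℤ :=
  ((2 * i + 1).choose (i + m + 1) : ℤ) - ((2 * i + 1).choose (i + m + 2) : ℤ)

/-- The `n × n` tridiagonal matrix with all entries `1` in the band `|i - j| ≤ 1`, written as the
sum of its three diagonals. -/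
def triOnes (n : ℕ) : Matrix (Fin n) (Fin n) ℤ :=
  Matrix.of fun i j => (if j.val = i.val then 1 else 0) + (if j.val = i.val + 1 then 1 else 0) +
    (if i.val = j.val + 1 then 1 else 0)

lemma choose_add_two (a b : ℕ) :
    ((a + 2).choose (b + 2) : ℤ) = a.choose b + 2 * a.choose (b + 1) + a.choose (b + 2) := by
  rw [Nat.choose_succ_succ, Nat.choose_succ_succ, Nat.choose_succ_succ]
  push_cast
  ring

lemma ballot_succ_succ (i m : ℕ) :
    ballot (i + 1) (m + 1) = ballot i m + 2 * ballot i (m + 1) + ballot i (m + 2) := by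
  have h1 := choose_add_two (2 * i + 1) (i + m + 1)
  have h2 := choose_add_two (2 * i + 1) (i + m + 2)
  unfold ballot
  rw [show 2 * (i + 1) + 1 = 2 * i + 1 + 2 by ring,
    show i + 1 + (m + 1) + 1 = i + m + 1 + 2 by ring,
    show i + 1 + (m + 1) + 2 = i + m + 2 + 2 by ring, h1, h2,
    show i + (m + 1) + 1 = i + m + 1 + 1 by ring,
    show i + (m + 1) + 2 = i + m + 1 + 2 by ring,
    show i + (m + 2) + 1 = i + m + 2 + 1 by ring,
    show i + (m + 2) + 2 = i + m + 2 + 2 by ring,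
    show i + m + 1 + 1 = i + m + 2 by ring,
    show i + m + 1 + 2 = i + m + 2 + 1 by ring]
  ring

/-- The two middle binomial coefficients of an odd row agree. -/
lemma choose_middle (i : ℕ) : ((2 * i + 1).choose i : ℤ) = (2 * i + 1).choose (i + 1) := by
  have : (2 * i + 1).choose i = (2 * i + 1).choose (i + 1) :=
    Nat.choose_symm_of_eq_add (by ring)
  exact_mod_cast this

/-- The boundary case of `ballot_succ_succ`: the missing term `ballot i (-1)` is the difference of
the two middle binomial coefficients, which vanishes. -/
lemma ballot_succ_zero (i : ℕ) :
    ballot (i + 1) 0 = 2 * ballot i 0 + ballot i 1 := by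
  have h1 := choose_add_two (2 * i + 1) i
  have h2 := choose_add_two (2 * i + 1) (i + 1)
  have h3 := choose_middle i
  unfold ballot
  simp only [show 2 * (i + 1) + 1 = 2 * i + 1 + 2 by ring,
    show i + 1 + 0 + 1 = i + 2 by ring, show i + 0 + 1 = i + 1 by ring] at *
  rw [h1, h2, h3]
  ring

lemma ballot_eq_zero {i m : ℕ} (h : i < m) : ballot i m = 0 := by
  unfold ballot
  rw [Nat.choose_eq_zero_of_lt (by omega), Nat.choose_eq_zero_of_lt (by omega)]
  simp

lemma ballot_self (i : ℕ) : ballot i i = 1 := by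
  unfold ballot
  rw [show i + i + 1 = 2 * i + 1 by ring, Nat.choose_self,
    Nat.choose_eq_zero_of_lt (by omega)]
  simp

/-- Symmetry of the tridiagonal operator in the form of a summation by parts: on the first
`N + 1` entries only a boundary term remains. -/
lemma sum_by_parts (i j N : ℕ) :
    ∑ m ∈ Finset.range (N + 1), ballot (i + 1) m * ballot j m =
      ∑ m ∈ Finset.range (N + 1), ballot i m * ballot (j + 1) m +
        (ballot i (N + 1) * ballot j N - ballot i N * ballot j (N + 1)) := by
  induction N with
  | zero =>
    simp only [zero_add, Finset.sum_range_one, ballot_succ_zero]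
    ring
  | succ N ih =>
    rw [Finset.sum_range_succ, ih, Finset.sum_range_succ _ (N + 1), ballot_succ_succ,
      ballot_succ_succ]
    ring

lemma sum_ballot_mul_ballot (N : ℕ) : ∀ i j : ℕ, i + j ≤ N →
    ∑ m ∈ Finset.range (N + 1), ballot i m * ballot j m = ballot (i + j) 0 := by
  intro i
  induction i with
  | zero =>
    intro j _
    rw [Finset.sum_range_succ', Finset.sum_eq_zero, ballot_self]
    · simp
    · intro m _
      rw [ballot_eq_zero (Nat.succ_pos m), zero_mul]
  | succ i ih =>
    intro j h
    rw [sum_by_parts, ih (j + 1) (by omega), ballot_eq_zero (show i < N + 1 by omega),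
      ballot_eq_zero (show j < N + 1 by omega), show i + (j + 1) = i + 1 + j by ring]
    ring

/-- By triangularity, the sum may be cut off at any `n > i`. -/
lemma sum_range_ballot {i n : ℕ} (j : ℕ) (h : i < n) :
    ∑ m ∈ Finset.range n, ballot i m * ballot j m = ballot (i + j) 0 := by
  rw [← sum_ballot_mul_ballot (n + i + j) i j (by omega)]
  refine Finset.sum_subset (fun m hm => ?_) (fun m _ hm => ?_)
  · simp only [Finset.mem_range] at *
    omega
  · simp only [Finset.mem_range] at *
    rw [ballot_eq_zero (by omega), zero_mul]

lemma catalanConv_three (k : ℕ) :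
    catalanConv 3 k = ballot (k + 1) 0 - ballot k 0 := by
  -- Everything is expressed by the entries `k + 1`, `k + 2`, `k + 3` of row `2k + 1`, whose
  -- consecutive ratios are `hB` and `hD`.
  have hsymm : (2 * k + 3).choose k = (2 * k + 3).choose (k + 3) :=
    Nat.choose_symm_of_eq_add (by ring)
  have h1 := choose_add_two (2 * k + 1) k
  have h2 := choose_add_two (2 * k + 1) (k + 1)
  have h3 := choose_middle k
  have hB : ((2 * k + 1).choose (k + 2) : ℤ) * (k + 2) = (2 * k + 1).choose (k + 1) * k := by
    have := Nat.choose_succ_right_eq (2 * k + 1) (k + 1)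
    rw [show 2 * k + 1 - (k + 1) = k by omega] at this
    exact_mod_cast this
  have hD : ((2 * k + 1).choose (k + 3) : ℤ) * (k + 3) =
      (2 * k + 1).choose (k + 2) * (k - 1) := by
    rcases k with _ | k
    · simp [Nat.choose]
    · have := Nat.choose_succ_right_eq (2 * (k + 1) + 1) (k + 1 + 2)
      rw [show 2 * (k + 1) + 1 - (k + 1 + 2) = k by omega] at this
      push_cast
      rw [show ((k : ℤ) + 1 - 1) = k by ring]
      exact_mod_cast this
  unfold catalanConv
  refine Int.ediv_eq_of_eq_mul_right (by positivity) ?_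
  rw [hsymm]
  unfold ballot
  simp only [show 2 * (k + 1) + 1 = 2 * k + 3 by ring,
    show 2 * k + 1 + 2 = 2 * k + 3 by ring,
    show k + 1 + 0 + 1 = k + 2 by ring, show k + 1 + 0 + 2 = k + 3 by ring,
    show k + 0 + 1 = k + 1 by ring] at *
  rw [h1, h2, h3]
  push_cast
  linear_combination 2 * hB + 2 * hD

/-- On columns supported in the first `n` entries, `triOnes n` acts as `M - 1`. -/
lemma sum_triOnes_mul_ballot {n j : ℕ} (hj : j < n) (m : Fin n) :
    ∑ l : Fin n, triOnes n m l * ballot j l = ballot (j + 1) m - ballot j m := by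
  obtain ⟨m, hm⟩ := m
  have key : ∑ l : Fin n, triOnes n ⟨m, hm⟩ l * ballot j l =
      ∑ l ∈ Finset.range n, ((if l = m then 1 else 0) + (if l = m + 1 then 1 else 0) +
        (if m = l + 1 then 1 else 0)) * ballot j l := by
    rw [Finset.sum_range]
    rfl
  have hup : (if m + 1 < n then ballot j (m + 1) else 0) = ballot j (m + 1) := by
    split_ifs with h
    · rfl
    · rw [ballot_eq_zero (by omega)]
  rw [key]
  simp only [add_mul, ite_mul, one_mul, zero_mul, Finset.sum_add_distrib, Finset.sum_ite_eq',
    Finset.mem_range, hm, if_true, hup]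
  rcases m with _ | m
  · simp [ballot_succ_zero]
    ring
  · have : m < n := by omega
    simp [ballot_succ_succ, this]
    ring

lemma hankel_eq_det_triOnes (n : ℕ) : hankel (catalanConv 3) n = (triOnes n).det := by
  set P : Matrix (Fin n) (Fin n) ℤ := Matrix.of fun i m => ballot i m with hP
  have hdet : P.det = 1 := by
    rw [Matrix.det_of_isLowerTriangular]
    · simp [hP, ballot_self]
    · intro i j hij
      exact ballot_eq_zero hij
  have hmul : (Matrix.of fun i j : Fin n => catalanConv 3 (i.val + j.val)) =
      P * (triOnes n * P.transpose) := by
    ext i j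
    simp only [Matrix.mul_apply, hP, Matrix.of_apply, Matrix.transpose_apply,
      sum_triOnes_mul_ballot j.isLt, mul_sub, Finset.sum_sub_distrib]
    rw [← Finset.sum_range fun m => ballot i m * ballot (j + 1) m,
      ← Finset.sum_range fun m => ballot i m * ballot j m,
      sum_range_ballot _ i.isLt, sum_range_ballot _ i.isLt, catalanConv_three, add_assoc]
  rw [hankel, hmul, Matrix.det_mul, Matrix.det_mul, Matrix.det_transpose, hdet]
  ring

/-- Expansion along the first row; the minor of the entry `(0, 1)` is then expanded along its
first column. -/
lemma det_triOnes (n : ℕ) :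
    (triOnes (n + 2)).det = (triOnes (n + 1)).det - (triOnes n).det := by
  have hminor : ((triOnes (n + 2)).submatrix Fin.succ (Fin.succAbove 1)).det =
      (triOnes n).det := by
    rw [Matrix.det_succ_column_zero, Fin.sum_univ_succ, Finset.sum_eq_zero]
    · have : (((triOnes (n + 2)).submatrix Fin.succ (Fin.succAbove 1)).submatrix
          (Fin.succAbove 0) Fin.succ) = triOnes n := by
        ext i j
        have h : (Fin.succAbove (1 : Fin (n + 2)) j.succ) = j.succ.succ := by
          rw [show (1 : Fin (n + 2)) = Fin.succ 0 from rfl, Fin.succ_succAbove_succ]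
          simp
        simp [triOnes, h]
      rw [this]
      simp [triOnes]
    · intro i _
      simp [triOnes]
  have hfirst : (triOnes (n + 2)).submatrix Fin.succ (Fin.succAbove 0) = triOnes (n + 1) := by
    ext i j
    simp [triOnes]
  rw [Matrix.det_succ_row_zero, Fin.sum_univ_succ, Fin.sum_univ_succ, Finset.sum_eq_zero, hfirst,
    show Fin.succ (0 : Fin (n + 1)) = 1 from rfl, hminor]
  · simp [triOnes]
    ring
  · intro i _
    simp [triOnes]

theorem hankel_catalanConv_three (n : ℕ) :
    hankel (catalanConv 3) (3 * n) = (-1) ^ n ∧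
    hankel (catalanConv 3) (3 * n + 1) = (-1) ^ n ∧
    hankel (catalanConv 3) (3 * n + 2) = 0 := by
  simp only [hankel_eq_det_triOnes]
  induction n with
  | zero =>
    have h0 : (triOnes 0).det = 1 := Matrix.det_isEmpty
    have h1 : (triOnes 1).det = 1 := by simp [triOnes]
    have h2 : (triOnes 2).det = (triOnes 1).det - (triOnes 0).det := det_triOnes 0
    exact ⟨h0, h1, by rw [h0, h1] at h2; exact h2⟩
  | succ n ih =>
    obtain ⟨-, h1, h2⟩ := ih
    have h3 : (triOnes (3 * n + 3)).det = (triOnes (3 * n + 2)).det - (triOnes (3 * n + 1)).det :=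
      det_triOnes _
    have h4 : (triOnes (3 * n + 4)).det = (triOnes (3 * n + 3)).det - (triOnes (3 * n + 2)).det :=
      det_triOnes _
    have h5 : (triOnes (3 * n + 5)).det = (triOnes (3 * n + 4)).det - (triOnes (3 * n + 3)).det :=
      det_triOnes _
    change (triOnes (3 * n + 3)).det = _ ∧ (triOnes (3 * n + 4)).det = _ ∧
      (triOnes (3 * n + 5)).det = _
    rw [h5, h4, h3, h1, h2, pow_succ]
    simp
end

section
/- For every natural number n: H_{2n}(F(x,4)) = (-1)^n (n+1) and H_{2n+1}(F(x,4)) = (-1)^n (n+1). -/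
namespace HankelCatalan

/-- The right shift on sequences, filling in a zero. -/
def shift (f : ℕ → ℚ) : ℕ → ℚ
  | 0 => 0
  | k + 1 => f k

@[simp] lemma shift_zero (f : ℕ → ℚ) : shift f 0 = 0 := rfl
@[simp] lemma shift_succ (f : ℕ → ℚ) (k : ℕ) : shift f (k + 1) = f k := rfl

/-- The right shift is adjoint to the left shift on `[0, n)`; the condition `v n = 0` kills the
boundary term. -/
lemma sum_mul_shift (v f : ℕ → ℚ) (n : ℕ) (hv : v n = 0) :
    ∑ k ∈ Finset.range n, v k * shift f k = ∑ k ∈ Finset.range n, v (k + 1) * f k := by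
  have h : ∑ k ∈ Finset.range (n + 1), v k * shift f k
      = ∑ k ∈ Finset.range n, v (k + 1) * f k := by
    rw [Finset.sum_range_succ']; simp
  rw [← h, Finset.sum_range_succ, hv]; simp

/-- Multiplication by `y = x - 2` in Chebyshev coordinates. -/
def mulY (w : ℕ → ℚ) : ℕ → ℚ := fun k => shift w k + w (k + 1)

/-- Multiplication by `x = y + 2` in Chebyshev coordinates. -/
def mulX (w : ℕ → ℚ) : ℕ → ℚ := fun k => mulY w k + 2 * w k

/-- Multiplication by the weight `x (x - 2) = y² + 2 y` in Chebyshev coordinates. -/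
def weight (w : ℕ → ℚ) : ℕ → ℚ := fun k => mulY (mulY w) k + 2 * mulY w k

lemma mulX_weight (w : ℕ → ℚ) : mulX (weight w) = weight (mulX w) := by
  funext k
  rcases k with _ | _ | _ | k <;> simp [mulX, weight, mulY] <;> ring

/-- The coordinates of `x ^ i` in the Chebyshev basis. The binomials are written with lower index
`i + l` instead of `i - l` so that they vanish without truncated subtraction. -/
def powCoord (i l : ℕ) : ℚ := ((2 * i).choose (i + l) : ℚ) - ((2 * i).choose (i + l + 2) : ℚ)

lemma powCoord_of_lt {i l : ℕ} (h : i < l) : powCoord i l = 0 := by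
  simp [powCoord, Nat.choose_eq_zero_of_lt (show 2 * i < i + l by omega),
    Nat.choose_eq_zero_of_lt (show 2 * i < i + l + 2 by omega)]

lemma powCoord_self (i : ℕ) : powCoord i i = 1 := by
  simp [powCoord, ← two_mul, Nat.choose_eq_zero_of_lt (show 2 * i < 2 * i + 2 by omega)]

lemma choose_two_step (m r : ℕ) : ((m + 2).choose (r + 2) : ℚ)
    = m.choose r + 2 * m.choose (r + 1) + m.choose (r + 2) := by
  simp only [Nat.choose_succ_succ' (m + 1) (r + 1), Nat.choose_succ_succ' m r,
    Nat.choose_succ_succ' m (r + 1)]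
  push_cast; ring

lemma mulX_powCoord (i : ℕ) : mulX (powCoord i) = powCoord (i + 1) := by
  funext l
  rcases l with _ | l
  · rcases i with _ | i
    · simp [mulX, mulY, powCoord]
    · have e1 := choose_two_step (2 * (i + 1)) i
      have e2 := choose_two_step (2 * (i + 1)) (i + 2)
      -- the reflection at the boundary: the coordinate of index `-1` vanishes
      have e3 : (2 * (i + 1)).choose i = (2 * (i + 1)).choose (i + 2) :=
        Nat.choose_symm_of_eq_add (by ring)
      simp only [mulX, mulY, powCoord, shift_zero, show 2 * (i + 1 + 1) = 2 * (i + 1) + 2 by ring,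
        show i + 1 + 1 + 0 = i + 2 by ring,
        show i + 1 + 0 = i + 1 by ring, show i + 1 + 2 = i + 2 + 1 by ring]
      rw [e1, e2, e3]
      ring
  · have e1 := choose_two_step (2 * i) (i + l)
    have e2 := choose_two_step (2 * i) (i + l + 2)
    simp only [mulX, mulY, powCoord, shift_succ, show 2 * (i + 1) = 2 * i + 2 by ring,
      show i + 1 + (l + 1) = i + l + 2 by ring, show i + (l + 1 + 1) = i + l + 2 by ring,
      show i + (l + 1) = i + l + 1 by ring, show i + l + 1 + 2 = i + l + 2 + 1 by ring]
    rw [e1, e2]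
    ring

/-- Symmetry of `mulX`: pairing with the coordinates of `x ^ i` equals applying `mulX` `i` times
and pairing with those of `1`. -/
lemma sum_powCoord_mul (n i : ℕ) (hi : i < n) (w : ℕ → ℚ) :
    ∑ k ∈ Finset.range n, powCoord i k * w k = (mulX^[i] w) 0 := by
  induction i generalizing w with
  | zero =>
    rw [Finset.sum_eq_single_of_mem 0 (by simpa using hi)]
    · simp [powCoord_self]
    · intro k _ hk
      rw [powCoord_of_lt (by omega), zero_mul]
  | succ i ih =>
    rw [Function.iterate_succ_apply, ← ih (by omega), ← mulX_powCoord]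
    have h1 := sum_mul_shift (powCoord i) w n (powCoord_of_lt (by omega))
    have h2 : ∑ k ∈ Finset.range n, w k * shift (powCoord i) k
        = ∑ k ∈ Finset.range n, w (k + 1) * powCoord i k := by
      obtain ⟨m, rfl⟩ : ∃ m, n = m + 1 := ⟨n - 1, by omega⟩
      rw [Finset.sum_range_succ', Finset.sum_range_succ (fun k => w (k + 1) * powCoord i k),
        powCoord_of_lt (show i < m by omega)]
      simp
    have l1 : ∑ k ∈ Finset.range n, mulX (powCoord i) k * w k
        = ∑ k ∈ Finset.range n, w k * shift (powCoord i) k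
          + ∑ k ∈ Finset.range n, powCoord i (k + 1) * w k
          + 2 * ∑ k ∈ Finset.range n, powCoord i k * w k := by
      rw [Finset.mul_sum, ← Finset.sum_add_distrib, ← Finset.sum_add_distrib]
      exact Finset.sum_congr rfl fun k _ => by simp only [mulX, mulY]; ring
    have l2 : ∑ k ∈ Finset.range n, powCoord i k * mulX w k
        = ∑ k ∈ Finset.range n, powCoord i k * shift w k
          + ∑ k ∈ Finset.range n, w (k + 1) * powCoord i k
          + 2 * ∑ k ∈ Finset.range n, powCoord i k * w k := by
      rw [Finset.mul_sum, ← Finset.sum_add_distrib, ← Finset.sum_add_distrib]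
      exact Finset.sum_congr rfl fun k _ => by simp only [mulX, mulY]; ring
    rw [l1, l2, h1, h2]
    ring

lemma iterate_mulX_weight (i j : ℕ) :
    mulX^[i] (weight (powCoord j)) = weight (powCoord (i + j)) := by
  induction i with
  | zero => simp
  | succ i ih =>
    rw [Function.iterate_succ_apply', ih, mulX_weight, mulX_powCoord,
      show i + j + 1 = i + 1 + j by ring]

/-- The division in `catalanConv` is exact, since `C_k^{(4)}` is a difference of two binomials. -/
lemma catalanConv_four (k : ℕ) :
    catalanConv 4 k = ((2 * k + 3).choose (k + 3) : ℤ) - ((2 * k + 3).choose (k + 4) : ℤ) := by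
  have hs : (2 * k + 4).choose k = (2 * k + 4).choose (k + 4) :=
    Nat.choose_symm_of_eq_add (by ring)
  have h1 := Nat.add_one_mul_choose_eq (2 * k + 3) (k + 3)
  have h2 := Nat.choose_succ_succ' (2 * k + 3) (k + 3)
  simp only [show 2 * k + 3 + 1 = 2 * k + 4 by ring, show k + 3 + 1 = k + 4 by ring] at h1 h2
  unfold catalanConv
  apply Int.ediv_eq_of_eq_mul_left (by positivity)
  push_cast
  rw [hs]
  zify at h1 h2
  rw [h2] at h1 ⊢
  linear_combination (-2 : ℤ) * h1

/-- The moment `C_k^{(4)}` is the constant coordinate of `x ^ k` times the weight. -/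
lemma weight_powCoord_zero (k : ℕ) : weight (powCoord k) 0 = (catalanConv 4 k : ℚ) := by
  rw [catalanConv_four]
  have e1 := choose_two_step (2 * k + 1) (k + 1)
  have e2 := choose_two_step (2 * k + 1) (k + 2)
  have p (r : ℕ) : ((2 * k + 1).choose (r + 1) : ℚ) = (2 * k).choose r + (2 * k).choose (r + 1) := by
    exact_mod_cast Nat.choose_succ_succ' (2 * k) r
  simp only [show 2 * k + 1 + 2 = 2 * k + 3 by ring, show k + 1 + 2 = k + 3 by ring,
    show k + 2 + 2 = k + 4 by ring] at e1 e2
  push_cast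
  rw [e1, e2, p k, p (k + 1), p (k + 2), p (k + 3)]
  simp only [weight, mulY, powCoord, shift_zero, shift_succ, add_assoc]
  norm_num
  ring

lemma gram_powCoord (n i j : ℕ) (hi : i < n) :
    ∑ k ∈ Finset.range n, powCoord i k * weight (powCoord j) k = (catalanConv 4 (i + j) : ℚ) := by
  rw [sum_powCoord_mul n i hi, iterate_mulX_weight, weight_powCoord_zero]

/-- The diagonal of `D` in `B = ℓ D ℓᵀ`: `1` at even `k`, and `-(m+2)/(m+1)` at `k = 2m+1`. -/
def pivot (k : ℕ) : ℚ := if Even k then 1 else -((k : ℚ) + 3) / (k + 1)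

/-- The first subdiagonal of `ℓ` in `B = ℓ D ℓᵀ`. -/
def subdiag (k : ℕ) : ℚ := if Even k then 2 else 0

/-- The operator `ℓᵀ` in `B = ℓ D ℓᵀ`; the second subdiagonal of `ℓ` is `1 / pivot`. -/
def upper (w : ℕ → ℚ) (k : ℕ) : ℚ := w k + subdiag k * w (k + 1) + w (k + 2) / pivot k

lemma pivot_ne_zero (k : ℕ) : pivot k ≠ 0 := by
  unfold pivot
  split_ifs
  · exact one_ne_zero
  · exact div_ne_zero (neg_ne_zero.mpr (by positivity)) (by positivity)

/-- The factorisation `B = ℓ D ℓᵀ`. -/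
lemma weight_eq_ldl (w : ℕ → ℚ) (k : ℕ) : weight w k = pivot k * upper w k
    + shift (fun l => subdiag l * pivot l * upper w l + shift (upper w) l) k := by
  rcases k with _ | _ | k
  · simp [weight, mulY, upper, pivot, subdiag]; ring
  · simp [weight, mulY, upper, pivot, subdiag]; ring
  · simp only [weight, mulY, upper, shift_succ]
    by_cases h : Even k
    · have h1 : ¬ Even (k + 1) := by simpa [Nat.even_add_one] using h
      have h2 : Even (k + 2) := by simpa [Nat.even_add_one] using h
      simp only [pivot, subdiag, h, h1, h2, if_true, if_false]
      ring
    · have h1 : Even (k + 1) := by simpa [Nat.even_add_one] using h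
      have h2 : ¬ Even (k + 2) := by simpa [Nat.even_add_one] using h
      simp only [pivot, subdiag, h, h1, h2, if_true, if_false]
      have a1 : (k : ℚ) + 1 ≠ 0 := by positivity
      have a3 : (k : ℚ) + 3 ≠ 0 := by positivity
      have a5 : (k : ℚ) + 5 ≠ 0 := by positivity
      have a3' : (k : ℚ) + 2 + 1 ≠ 0 := by positivity
      have a5' : (k : ℚ) + 2 + 3 ≠ 0 := by positivity
      push_cast
      field_simp
      ring

/-- The bilinear form of `B` on `[0, n)` diagonalised; the vanishing of `v` at `n` and `n + 1` kills
the boundary terms. -/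
lemma sum_mul_weight (v w : ℕ → ℚ) (n : ℕ) (h0 : v n = 0) (h1 : v (n + 1) = 0) :
    ∑ k ∈ Finset.range n, v k * weight w k
      = ∑ k ∈ Finset.range n, upper v k * pivot k * upper w k := by
  have s1 := sum_mul_shift v
    (fun l => subdiag l * pivot l * upper w l + shift (upper w) l) n h0
  have s2 := sum_mul_shift (fun k => v (k + 1)) (upper w) n h1
  simp only [weight_eq_ldl w, mul_add, Finset.sum_add_distrib] at s1 ⊢
  rw [s1, s2, ← Finset.sum_add_distrib, ← Finset.sum_add_distrib]
  refine Finset.sum_congr rfl fun k _ => ?_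
  have := pivot_ne_zero k
  rw [upper.eq_def v k]
  field_simp
  ring

/-- The determinant is the product of the pivots. -/
lemma hankel_eq_prod (n : ℕ) :
    (hankel (catalanConv 4) n : ℚ) = ∏ k ∈ Finset.range n, pivot k := by
  let P : Matrix (Fin n) (Fin n) ℚ := Matrix.of fun i k => upper (powCoord i) k
  have hP : P.det = 1 := by
    rw [Matrix.det_of_isLowerTriangular P]
    · refine Finset.prod_eq_one fun i _ => ?_
      simp [P, upper, powCoord_self, powCoord_of_lt]
    · intro i j hij
      have hij' : (i : ℕ) < j := hij
      simp [P, upper, powCoord_of_lt hij', powCoord_of_lt (show (i : ℕ) < j + 1 by omega),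
        powCoord_of_lt (show (i : ℕ) < j + 2 by omega)]
  have hfac : (Matrix.of fun i j : Fin n => catalanConv 4 (i.val + j.val)).map (Int.castRingHom ℚ)
      = P * Matrix.diagonal (fun k : Fin n => pivot k) * P.transpose := by
    ext i j
    rw [Matrix.mul_apply]
    simp only [Matrix.mul_diagonal, Matrix.transpose_apply, Matrix.map_apply, Matrix.of_apply, P,
      eq_intCast]
    rw [← gram_powCoord n i j i.isLt, sum_mul_weight _ _ _ (powCoord_of_lt (by omega))
      (powCoord_of_lt (by omega)), Finset.sum_range]
  unfold hankel
  rw [← eq_intCast (Int.castRingHom ℚ), RingHom.map_det, RingHom.mapMatrix_apply, hfac,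
    Matrix.det_mul, Matrix.det_mul, Matrix.det_transpose, hP, Matrix.det_diagonal,
    Finset.prod_range]
  ring

lemma prod_pivot (n : ℕ) :
    ∏ k ∈ Finset.range (2 * n), pivot k = (-1) ^ n * ((n : ℚ) + 1) := by
  induction n with
  | zero => simp
  | succ n ih =>
    rw [show 2 * (n + 1) = 2 * n + 1 + 1 by ring, Finset.prod_range_succ, Finset.prod_range_succ,
      ih]
    have h1 : ¬ Even (2 * n + 1) := by simp
    simp only [pivot, even_two_mul, h1, if_true, if_false]
    have : (2 * (n : ℚ) + 1 + 1) ≠ 0 := by positivity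
    push_cast
    field_simp
    ring

end HankelCatalan

open HankelCatalan in
theorem hankel_catalanConv_four (n : ℕ) :
    hankel (catalanConv 4) (2 * n) = (-1) ^ n * (n + 1) ∧
    hankel (catalanConv 4) (2 * n + 1) = (-1) ^ n * (n + 1) := by
  constructor
  · have h := (hankel_eq_prod (2 * n)).trans (prod_pivot n)
    exact_mod_cast h
  · have h := hankel_eq_prod (2 * n + 1)
    -- the pivot of even index is `1`, so passing from `2 n` to `2 n + 1` changes nothing
    rw [Finset.prod_range_succ, prod_pivot, show pivot (2 * n) = 1 by simp [pivot], mul_one] at h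
    exact_mod_cast h
end

section
/- For every natural number n: H_{5n}(F(x,5)) = 1, H_{5n+1}(F(x,5)) = 1, H_{5n+2}(F(x,5)) = -5(n+1), H_{5n+3}(F(x,5)) = 0, and H_{5n+4}(F(x,5)) = 5(n+1). -/
open Polynomial Finset

/-! ### The moment functional and its Gram matrix -/

/-- `mom k a` is the value of the moment functional at `p a * X ^ k`. -/
def mom (k a : ℕ) : ℤ := ((2 * k + 4).choose (k + a) : ℤ) - ((2 * k + 4).choose (k + a + 5) : ℤ)

lemma catalanConv_five (k : ℕ) : catalanConv 5 k = mom k 0 := by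
  have h1 : ((k : ℤ) + 5) * (2 * k + 5).choose k = (2 * k + 5) * (2 * k + 4).choose k := by
    have h := Nat.add_one_mul_choose_eq (2 * k + 4) (k + 4)
    have e1 : (2 * k + 4).choose (k + 4) = (2 * k + 4).choose k :=
      Nat.choose_symm_of_eq_add (by omega)
    have e2 : (2 * k + 4 + 1).choose (k + 4 + 1) = (2 * k + 5).choose k :=
      Nat.choose_symm_of_eq_add (by omega)
    rw [e1, e2] at h
    zify at h
    linear_combination -h
  have h2 : (k : ℤ) * (2 * k + 5).choose k = (2 * k + 5) * (2 * k + 4).choose (k + 5) := by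
    rcases k with _ | k
    · simp
    · have h := Nat.add_one_mul_choose_eq (2 * (k + 1) + 4) k
      have e1 : (2 * (k + 1) + 4).choose k = (2 * (k + 1) + 4).choose (k + 1 + 5) :=
        Nat.choose_symm_of_eq_add (by omega)
      rw [e1] at h
      zify at h
      push_cast
      linear_combination -h
  unfold catalanConv mom
  apply Int.ediv_eq_of_eq_mul_right (by positivity)
  push_cast
  simp only [add_zero]
  linear_combination h1 - h2

/-- Pascal's rule applied twice. -/
lemma choose_add_two_s2 (N j : ℕ) :
    ((N + 2).choose (j + 2) : ℤ) = N.choose j + 2 * N.choose (j + 1) + N.choose (j + 2) := by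
  rw [Nat.choose_succ_succ (N + 1), Nat.choose_succ_succ N, Nat.choose_succ_succ N]
  push_cast; ring

lemma mom_succ_succ (k a : ℕ) :
    mom (k + 1) (a + 1) = mom k a + 2 * mom k (a + 1) + mom k (a + 2) := by
  have h1 := choose_add_two_s2 (2 * k + 4) (k + a)
  have h2 := choose_add_two_s2 (2 * k + 4) (k + a + 5)
  unfold mom
  rw [show 2 * (k + 1) + 4 = 2 * k + 4 + 2 by ring, show k + 1 + (a + 1) = k + a + 2 by ring,
    show k + a + 2 + 5 = k + a + 5 + 2 by ring, h1, h2]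
  ring_nf

lemma mom_succ_zero (k : ℕ) : mom (k + 1) 0 = mom k 0 + mom k 1 := by
  have h2 := choose_add_two_s2 (2 * k + 4) (k + 4)
  have e1 : (2 * k + 4).choose (k + 4) = (2 * k + 4).choose k :=
    Nat.choose_symm_of_eq_add (by omega)
  have h1 : ((2 * k + 4 + 2).choose (k + 1) : ℤ) =
      (2 * k + 4).choose (k + 5) + 2 * (2 * k + 4).choose k + (2 * k + 4).choose (k + 1) := by
    rcases k with _ | k
    · simp [Nat.choose]
    · have h := choose_add_two_s2 (2 * (k + 1) + 4) k
      have e : (2 * (k + 1) + 4).choose k = (2 * (k + 1) + 4).choose (k + 1 + 5) :=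
        Nat.choose_symm_of_eq_add (by omega)
      rw [e] at h
      exact h
  unfold mom
  rw [show 2 * (k + 1) + 4 = 2 * k + 4 + 2 by ring, show k + 1 + 0 = k + 1 by ring,
    show k + 1 + 5 = k + 4 + 2 by ring, h1, h2, e1]
  ring_nf

/-- The linear functional on `ℤ[X]` with moments `L (X ^ k) = mom k 0 = C_k^{(5)}`. -/
noncomputable def momentL : ℤ[X] →ₗ[ℤ] ℤ :=
  Polynomial.lsum fun k => mom k 0 • (LinearMap.id : ℤ →ₗ[ℤ] ℤ)

lemma momentL_X_pow (k : ℕ) : momentL (X ^ k) = mom k 0 := by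
  rw [momentL, Polynomial.lsum_apply, ← monomial_one_right_eq_X_pow,
    Polynomial.sum_monomial_index] <;> simp

/-- The monic polynomials with `p_a (q + 2 + q⁻¹) = q^{-a} + ⋯ + q^a`. -/
noncomputable def p : ℕ → ℤ[X]
  | 0 => 1
  | 1 => X - 1
  | a + 2 => (X - 2) * p (a + 1) - p a

lemma X_mul_p_zero : X * p 0 = p 1 + p 0 := by simp [p]

lemma X_mul_p_succ (a : ℕ) : X * p (a + 1) = p (a + 2) + 2 * p (a + 1) + p a := by
  rw [p.eq_3]; ring

lemma coeff_p (a : ℕ) : (p a).coeff a = 1 ∧ ∀ k, a < k → (p a).coeff k = 0 := by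
  induction a using Nat.twoStepInduction with
  | zero => exact ⟨by simp [p], fun k hk => by simp [p, coeff_one, hk.ne']⟩
  | one =>
    refine ⟨by simp [p, coeff_one], fun k hk => ?_⟩
    simp [p, coeff_one, coeff_X, hk.ne]
    omega
  | more a h0 h1 =>
    have key : ∀ k, (p (a + 2)).coeff (k + 1) =
        (p (a + 1)).coeff k - 2 * (p (a + 1)).coeff (k + 1) - (p a).coeff (k + 1) := by
      intro k
      have h : p (a + 2) = X * p (a + 1) - C 2 * p (a + 1) - p a := by
        rw [p.eq_3, show (C 2 : ℤ[X]) = 2 from rfl]; ring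
      rw [h, coeff_sub, coeff_sub, coeff_X_mul, coeff_C_mul]
    refine ⟨?_, fun k hk => ?_⟩
    · rw [key, h1.1, h1.2 _ (by omega), h0.2 _ (by omega)]; ring
    · obtain ⟨k, rfl⟩ : ∃ l, k = l + 1 := ⟨k - 1, by omega⟩
      rw [key, h1.2 _ (by omega), h1.2 _ (by omega), h0.2 _ (by omega)]; ring

lemma moment_p_mul_X_pow (a k : ℕ) : momentL (p a * X ^ k) = mom k a := by
  induction a using Nat.twoStepInduction generalizing k with
  | zero => simp [p, momentL_X_pow]
  | one =>
    have h : p 1 * X ^ k = X ^ (k + 1) - X ^ k := by simp only [p]; ring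
    rw [h, map_sub, momentL_X_pow, momentL_X_pow, mom_succ_zero]; ring
  | more a h0 h1 =>
    have h : p (a + 2) * X ^ k =
        p (a + 1) * X ^ (k + 1) - (2 : ℤ) • (p (a + 1) * X ^ k) - p a * X ^ k := by
      rw [p.eq_3, two_smul]; ring
    rw [h, map_sub, map_sub, map_smul, h0, h1, h1, mom_succ_succ, smul_eq_mul]; ring

/-- The even function on `ℤ` whose values at `0, …, 4` are the tail sums `16, 15, 11, 5, 1` of the
binomial coefficients `binom(4, m)`, and `0` further out. -/
def g (d : ℤ) : ℤ :=
  match d.natAbs with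
  | 0 => 16
  | 1 => 15
  | 2 => 11
  | 3 => 5
  | 4 => 1
  | _ => 0

lemma g_neg (d : ℤ) : g (-d) = g d := by simp [g]

lemma g_eq_zero {d : ℤ} (h : 5 ≤ d) : g d = 0 := by
  obtain ⟨k, rfl⟩ : ∃ k : ℕ, d = (k + 5 : ℕ) := ⟨(d - 5).toNat, by omega⟩
  rfl

lemma g_eq_zero_of_neg {d : ℤ} (h : d ≤ -5) : g d = 0 := by
  rw [← g_neg, g_eq_zero (by omega)]

lemma moment_p (a : ℕ) : momentL (p a) = g a - g (a + 1) := by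
  have h := moment_p_mul_X_pow a 0
  rw [pow_zero, mul_one] at h
  rw [h]
  rcases lt_or_ge a 5 with ha | ha
  · interval_cases a <;> rfl
  · rw [g_eq_zero (by omega), g_eq_zero (by omega), mom, Nat.choose_eq_zero_of_lt (by omega),
      Nat.choose_eq_zero_of_lt (by omega)]
    rfl

lemma moment_p_mul_p (a b : ℕ) : momentL (p a * p b) = g (a - b) - g (a + b + 1) := by
  induction a using Nat.twoStepInduction generalizing b with
  | zero =>
    rw [p.eq_1, one_mul, moment_p, ← g_neg b]
    congr 2 <;> push_cast <;> ring
  | one =>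
    rcases b with _ | b
    · rw [p.eq_1, mul_one, moment_p]; rfl
    · have h : p 1 * p (b + 1) = p (b + 2) + p (b + 1) + p b := by
        have := X_mul_p_succ b
        rw [p.eq_2]; linear_combination this
      rw [h, map_add, map_add, moment_p, moment_p, moment_p, ← g_neg (((1 : ℕ) : ℤ) - _)]
      push_cast
      ring_nf
  | more a h0 h1 =>
    rcases b with _ | b
    · have h : p (a + 2) * p 0 = p (a + 1) * p 1 - p (a + 1) * p 0 - p a * p 0 := by
        have := X_mul_p_zero
        rw [p.eq_3]; linear_combination (p (a + 1)) * this
      rw [h, map_sub, map_sub, h0, h1, h1]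
      push_cast
      ring_nf
    · have h : p (a + 2) * p (b + 1) = p (a + 1) * p (b + 2) + p (a + 1) * p b
          - p a * p (b + 1) := by
        have := X_mul_p_succ b
        rw [p.eq_3]; linear_combination (p (a + 1)) * this
      rw [h, map_sub, map_add, h0, h1, h1]
      push_cast
      ring_nf

lemma p_eq_sum {a N : ℕ} (h : a < N) :
    p a = ∑ k : Fin N, (p a).coeff k • (X : ℤ[X]) ^ (k : ℕ) := by
  have hd : (p a).natDegree < N :=
    lt_of_le_of_lt (natDegree_le_iff_coeff_eq_zero.2 (coeff_p a).2) h
  conv_lhs => rw [as_sum_range' (p a) N hd]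
  rw [Finset.sum_range]
  exact Finset.sum_congr rfl fun k _ => (smul_X_eq_monomial).symm

/-- Passing from the monomial basis to the monic family `p` is a unitriangular change of basis,
so the Hankel determinant is the Gram determinant of `p`. -/
lemma det_gram (N : ℕ) : hankel (catalanConv 5) N =
    (Matrix.of fun i j : Fin N => g ((i : ℕ) - (j : ℕ)) - g ((i : ℕ) + (j : ℕ) + 1)).det := by
  set U : Matrix (Fin N) (Fin N) ℤ := Matrix.of fun i k => (p i).coeff k with hU
  have hdet : U.det = 1 := by
    rw [Matrix.det_of_isLowerTriangular U fun i k hik => (coeff_p i).2 k hik]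
    exact Finset.prod_eq_one fun i _ => (coeff_p i).1
  set H : Matrix (Fin N) (Fin N) ℤ :=
    Matrix.of fun i j : Fin N => catalanConv 5 (i.val + j.val) with hH
  have key : (Matrix.of fun i j : Fin N => g ((i : ℕ) - (j : ℕ)) - g ((i : ℕ) + (j : ℕ) + 1))
      = U * H * U.transpose := by
    ext i j
    rw [Matrix.of_apply, ← moment_p_mul_p]
    conv_lhs => rw [p_eq_sum i.2, p_eq_sum j.2]
    rw [Finset.sum_mul_sum, Finset.sum_comm]
    simp only [map_sum, Matrix.mul_apply (M := U * H), Matrix.mul_apply (M := U), Finset.sum_mul]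
    refine Finset.sum_congr rfl fun l _ => Finset.sum_congr rfl fun k _ => ?_
    rw [smul_mul_smul_comm, ← pow_add, map_smul, momentL_X_pow, ← catalanConv_five]
    simp only [hU, hH, Matrix.of_apply, Matrix.transpose_apply, smul_eq_mul]
    ring_nf
  rw [key, Matrix.det_mul, Matrix.det_mul, Matrix.det_transpose, hdet, one_mul, mul_one]
  rfl

/-! ### Block elimination -/

/-- The vector `(0, 1, 2, 1, 0, 0, …)`. -/
def u : ℕ → ℤ
  | 1 => 1
  | 2 => 2
  | 3 => 1
  | _ => 0

/-- The matrix that remains of the Gram matrix after eliminating `m` leading `5 × 5` blocks. -/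
def E (m : ℤ) (i j : ℕ) : ℤ := g (i - j) - g (i + j + 1) - 5 * m * (u i * u j)

/-- The leading `5 × 5` block of `E m`. -/
def lead (m : ℤ) : Matrix (Fin 5) (Fin 5) ℤ :=
  !![1, 4, 6, 4, 1;
    4, 11 - 5 * m, 14 - 10 * m, 11 - 5 * m, 5;
    6, 14 - 10 * m, 16 - 20 * m, 15 - 10 * m, 11;
    4, 11 - 5 * m, 15 - 10 * m, 16 - 5 * m, 15;
    1, 5, 11, 15, 16]

/-- The inverse of `lead m`. -/
def leadInv (m : ℤ) : Matrix (Fin 5) (Fin 5) ℤ :=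
  !![314 + 405 * m, -260 - 315 * m, 195 + 225 * m, -121 - 135 * m, 41 + 45 * m;
    -260 - 315 * m, 215 + 245 * m, -161 - 175 * m, 100 + 105 * m, -34 - 35 * m;
    195 + 225 * m, -161 - 175 * m, 120 + 125 * m, -74 - 75 * m, 25 + 25 * m;
    -121 - 135 * m, 100 + 105 * m, -74 - 75 * m, 45 + 45 * m, -15 - 15 * m;
    41 + 45 * m, -34 - 35 * m, 25 + 25 * m, -15 - 15 * m, 5 + 5 * m]

lemma E_lead (m : ℤ) (i j : Fin 5) : E m i j = lead m i j := by
  fin_cases i <;> fin_cases j <;> simp [E, lead, g, u] <;> ring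

lemma lead_mul_leadInv (m : ℤ) : lead m * leadInv m = 1 := by
  ext i j
  fin_cases i <;> fin_cases j <;>
    simp [lead, leadInv, Matrix.mul_apply, Fin.sum_univ_five] <;> ring

lemma det_lead_five (m : ℤ) : (lead m).det = 1 := by
  simp [lead, Matrix.det_succ_row_zero, Fin.sum_univ_succ, Fin.succAbove]
  ring

lemma E_left (m : ℤ) {i : ℕ} (k : ℕ) (hi : 5 ≤ i) : E m i k = g (i - k) := by
  obtain ⟨i, rfl⟩ := Nat.exists_eq_add_of_le' hi
  have hu : u (i + 5) = 0 := rfl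
  rw [E, hu, g_eq_zero (d := _ + _ + 1) (by push_cast; omega)]
  ring

lemma E_symm (m : ℤ) (i j : ℕ) : E m i j = E m j i := by
  unfold E
  rw [← g_neg (i - j), neg_sub, add_comm (i : ℤ), mul_comm (u i)]

/-- The Schur complement of the leading block of `E m`, entry by entry, is `E (m + 1)`. -/
lemma schur_step (m : ℤ) (i j : ℕ) :
    E m (5 + i) (5 + j) - ∑ l : Fin 5, (∑ k : Fin 5, E m (5 + i) k * leadInv m k l) * E m l (5 + j)
      = E (m + 1) i j := by
  have hE : E m (5 + i) (5 + j) = g (i - j) := by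
    rw [E_left m _ (by omega)]; push_cast; ring_nf
  have hL : ∀ k : Fin 5, E m (5 + i) k = g (5 + i - (k : ℕ)) := fun k => by
    rw [E_left m _ (by omega)]; push_cast; ring_nf
  have hR : ∀ k : Fin 5, E m k (5 + j) = g (5 + j - (k : ℕ)) := fun k => by
    rw [E_symm, E_left m _ (by omega)]; push_cast; ring_nf
  simp only [hE, hL, hR]
  -- Outside the leading block the correction term vanishes because of the bandwidth.
  rcases lt_or_ge i 5 with hi | hi
  · rcases lt_or_ge j 5 with hj | hj
    · interval_cases i <;> interval_cases j <;>
        simp [Fin.sum_univ_five, leadInv, E, g, u] <;> ring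
    · rw [E_symm, E_left _ _ hj, Finset.sum_eq_zero, sub_zero, ← g_neg, neg_sub]
      intro l _
      rw [g_eq_zero (d := 5 + (j : ℤ) - _) (by omega), mul_zero]
  · rw [E_left _ _ hi, Finset.sum_eq_zero, sub_zero]
    intro l _
    rw [Finset.sum_eq_zero, zero_mul]
    intro k _
    rw [g_eq_zero (d := 5 + (i : ℤ) - _) (by omega), zero_mul]

/-- The `N × N` leading minor of `E m`. -/
def detE (m : ℤ) (N : ℕ) : ℤ := (Matrix.of fun i j : Fin N => E m i j).det

lemma detE_five_add (m : ℤ) (N : ℕ) : detE m (5 + N) = detE (m + 1) N := by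
  let _ : Invertible (lead m) := invertibleOfRightInverse _ _ (lead_mul_leadInv m)
  have hinv : ⅟(lead m) = leadInv m := rfl
  unfold detE
  rw [← Matrix.det_submatrix_equiv_self finSumFinEquiv]
  rw [← Matrix.fromBlocks_toBlocks (Matrix.submatrix _ _ _)]
  have h11 : (Matrix.submatrix (Matrix.of fun i j : Fin (5 + N) => E m i j)
      finSumFinEquiv finSumFinEquiv).toBlocks₁₁ = lead m := by
    ext i j
    simpa [Matrix.toBlocks₁₁] using E_lead m i j
  rw [h11, Matrix.det_fromBlocks₁₁, det_lead_five, one_mul, hinv]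
  congr 1
  ext i j
  rw [Matrix.sub_apply, Matrix.mul_apply]
  simp only [Matrix.mul_apply]
  simpa [Matrix.toBlocks₁₂, Matrix.toBlocks₂₁, Matrix.toBlocks₂₂] using schur_step m i j

lemma detE_five_mul_add (n : ℕ) (m : ℤ) (k : ℕ) : detE m (5 * n + k) = detE (m + n) k := by
  induction n generalizing m with
  | zero => simp
  | succ n ih =>
    rw [show 5 * (n + 1) + k = 5 + (5 * n + k) by ring, detE_five_add, ih]
    push_cast
    ring_nf

lemma hankel_eq_detE (n k : ℕ) : hankel (catalanConv 5) (5 * n + k) = detE n k := by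
  have h := detE_five_mul_add n 0 k
  rw [zero_add] at h
  rw [← h, det_gram, detE]
  simp [E]

theorem hankel_catalanConv_five (n : ℕ) :
    hankel (catalanConv 5) (5 * n) = 1 ∧
    hankel (catalanConv 5) (5 * n + 1) = 1 ∧
    hankel (catalanConv 5) (5 * n + 2) = -5 * (n + 1) ∧
    hankel (catalanConv 5) (5 * n + 3) = 0 ∧
    hankel (catalanConv 5) (5 * n + 4) = 5 * (n + 1) := by
  have h0 : hankel (catalanConv 5) (5 * n) = detE n 0 := hankel_eq_detE n 0
  rw [h0, hankel_eq_detE, hankel_eq_detE, hankel_eq_detE, hankel_eq_detE]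
  refine ⟨?_, ?_, ?_, ?_, ?_⟩
  · simp [detE]
  · simp [detE, E, g, u]
  · simp [detE, Matrix.det_fin_two, E, g, u]
    ring
  · simp [detE, Matrix.det_fin_three, E, g, u]
    ring
  · simp [detE, Matrix.det_succ_row_zero, Fin.sum_univ_succ, Fin.succAbove, E, g, u]
    ring
end

section
/- For every natural number n: H_{7n}(F(x,7)) = (-1)^n, H_{7n+1}(F(x,7)) = (-1)^n, H_{7n+2}(F(x,7)) = (-1)^n · (7/6)·(n+1)(98n^2+49n−12), H_{7n+3}(F(x,7)) = (-1)^{n+1} · 49(n+1)^2, H_{7n+4}(F(x,7)) = 0, H_{7n+5}(F(x,7)) = (-1)^n · 49(n+1)^2, and H_{7n+6}(F(x,7)) = (-1)^n · (7/6)·(n+1)(98n^2+343n+282). -/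
section

open Finset

/-! ### Leading minors of infinite integer matrices -/

/-- The leading principal `n × n` minor of the infinite matrix `F`. -/
def leadingMinor (F : ℕ → ℕ → ℤ) (n : ℕ) : ℤ :=
  Matrix.det (Matrix.of fun i j : Fin n => F i.val j.val)

lemma leadingMinor_congr {F G : ℕ → ℕ → ℤ} {n : ℕ}
    (h : ∀ i j, i < n → j < n → F i j = G i j) : leadingMinor F n = leadingMinor G n := by
  unfold leadingMinor
  congr 1
  ext i j
  exact h _ _ i.2 j.2

lemma leadingMinor_mul (F G : ℕ → ℕ → ℤ) (n : ℕ) :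
    leadingMinor F n * leadingMinor G n =
      leadingMinor (fun i j => ∑ l ∈ range n, F i l * G l j) n := by
  unfold leadingMinor
  rw [← Matrix.det_mul]
  congr 1
  ext i j
  simp only [Matrix.mul_apply, Matrix.of_apply]
  exact Fin.sum_univ_eq_sum_range (fun l => F i l * G l j) n

lemma leadingMinor_eq_one_of_lower {F : ℕ → ℕ → ℤ} {n : ℕ} (h0 : ∀ i j, i < j → F i j = 0)
    (h1 : ∀ i, F i i = 1) : leadingMinor F n = 1 := by
  unfold leadingMinor
  rw [Matrix.det_of_isLowerTriangular]
  · simp [h1]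
  · intro i j hij
    exact h0 _ _ hij

lemma leadingMinor_eq_one_of_upper {F : ℕ → ℕ → ℤ} {n : ℕ} (h0 : ∀ i j, j < i → F i j = 0)
    (h1 : ∀ i, F i i = 1) : leadingMinor F n = 1 := by
  unfold leadingMinor
  rw [Matrix.det_of_isUpperTriangular]
  · simp [h1]
  · intro i j hij
    exact h0 _ _ hij

/-- The block lower triangular case. -/
lemma leadingMinor_add_of_lower {F : ℕ → ℕ → ℤ} {m n : ℕ}
    (h : ∀ i j, i < m → m ≤ j → j < m + n → F i j = 0) :
    leadingMinor F (m + n) = leadingMinor F m * leadingMinor (fun i j => F (m + i) (m + j)) n := by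
  unfold leadingMinor
  rw [← Matrix.det_submatrix_equiv_self finSumFinEquiv]
  rw [← Matrix.det_fromBlocks_zero₁₂ _ (Matrix.of fun (i : Fin n) (j : Fin m) => F (m + i) j)]
  congr 1
  ext (i | i) (j | j) <;> simp
  exact h _ _ i.2 (by omega) (by omega)

/-- The block upper triangular case. -/
lemma leadingMinor_add_of_upper {F : ℕ → ℕ → ℤ} {m n : ℕ}
    (h : ∀ i j, m ≤ i → i < m + n → j < m → F i j = 0) :
    leadingMinor F (m + n) = leadingMinor F m * leadingMinor (fun i j => F (m + i) (m + j)) n := by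
  unfold leadingMinor
  rw [← Matrix.det_submatrix_equiv_self finSumFinEquiv]
  rw [← Matrix.det_fromBlocks_zero₂₁ _ (Matrix.of fun (i : Fin m) (j : Fin n) => F i (m + j))]
  congr 1
  ext (i | i) (j | j) <;> simp
  exact h _ _ (by omega) (by omega) j.2

lemma val_finRotate_pow (n k : ℕ) (i : Fin (n + 1)) :
    (((finRotate (n + 1)) ^ k) i).val = (i.val + k) % (n + 1) := by
  induction k with
  | zero => simp [Nat.mod_eq_of_lt i.2]
  | succ k ih =>
    rw [pow_succ', Equiv.Perm.mul_apply, finRotate_apply, Fin.val_add, ih]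
    simp [← add_assoc]

/-- Cyclically shifting the columns by `k` places multiplies an `(n+1) × (n+1)` determinant
by `(-1)^{nk}`. -/
lemma leadingMinor_rotate (F : ℕ → ℕ → ℤ) (n k : ℕ) :
    leadingMinor (fun i j => F i ((j + k) % (n + 1))) (n + 1) =
      ((-1) ^ n) ^ k * leadingMinor F (n + 1) := by
  unfold leadingMinor
  have := Matrix.det_permute' ((finRotate (n + 1)) ^ k)
    (Matrix.of fun i j : Fin (n + 1) => F i.val j.val)
  rw [map_pow, sign_finRotate] at this
  simp only [Nat.add_sub_cancel] at this
  push_cast at this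
  rw [← this]
  congr 1
  ext i j
  simp only [Matrix.of_apply, Matrix.submatrix_apply, id]
  rw [← val_finRotate_pow, Equiv.Perm.iterate_eq_pow]

/-! ### The Hankel matrix in the Chebyshev basis -/

/-- The mixed moments `⟨x^i, u_j⟩`, where `u_j` is the `j`-th Chebyshev polynomial of the second
kind in `x - 2 = z + 1/z` and the moments of the pairing are the numbers `catalanConv 7`. -/
def mixedMoment (i j : ℕ) : ℤ := (2 * i + 5).choose (i + j) - (2 * i + 5).choose (i + j + 7)

lemma choose_add_two_s4 (n k : ℕ) : (((n + 2).choose (k + 2) : ℕ) : ℤ) =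
    n.choose (k + 2) + 2 * n.choose (k + 1) + n.choose k := by
  rw [show n + 2 = n + 1 + 1 by ring]
  simp only [Nat.choose_succ_succ']
  push_cast
  ring

/-- Multiplication of `u_{j+1}` by `x = (x - 2) + 2`, that is `x u_{j+1} = u_{j+2} + 2 u_{j+1} + u_j`,
read off on the moments; here it is Pascal's rule applied twice. -/
lemma mixedMoment_succ_succ (i j : ℕ) : mixedMoment (i + 1) (j + 1) =
    mixedMoment i (j + 2) + 2 * mixedMoment i (j + 1) + mixedMoment i j := by
  unfold mixedMoment
  have h1 := choose_add_two_s4 (2 * i + 5) (i + j)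
  have h2 := choose_add_two_s4 (2 * i + 5) (i + j + 7)
  rw [show 2 * i + 5 + 2 = 2 * (i + 1) + 5 by ring] at h1 h2
  rw [show i + 1 + (j + 1) = i + j + 2 by ring, show i + (j + 2) = i + j + 2 by ring,
    show i + (j + 1) = i + j + 1 by ring, h1, show i + j + 2 + 7 = i + j + 7 + 2 by ring,
    show i + j + 1 + 7 = i + j + 7 + 1 by ring, h2]
  ring

lemma mixedMoment_succ_zero (i : ℕ) : mixedMoment (i + 1) 0 =
    mixedMoment i 1 + 2 * mixedMoment i 0 := by
  rcases i with _ | i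
  · decide
  unfold mixedMoment
  have h1 := choose_add_two_s4 (2 * (i + 1) + 5) i
  have h2 := choose_add_two_s4 (2 * (i + 1) + 5) (i + 7)
  rw [show 2 * (i + 1) + 5 + 2 = 2 * (i + 1 + 1) + 5 by ring] at h1 h2
  -- the two boundary terms agree by the symmetry of the binomial coefficients
  have h3 : (2 * (i + 1) + 5).choose i = (2 * (i + 1) + 5).choose (i + 7) :=
    Nat.choose_symm_of_eq_add (by ring)
  rw [h3] at h1
  simp only [add_zero]
  rw [show i + 1 + 1 = i + 2 by ring] at *
  rw [h1, show i + 2 + 7 = i + 7 + 2 by ring, show i + 1 + 7 = i + 7 + 1 by ring, h2]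
  ring

lemma mixedMoment_eq_zero {i j : ℕ} (h : i + 5 < j) : mixedMoment i j = 0 := by
  unfold mixedMoment
  rw [Nat.choose_eq_zero_of_lt (by omega), Nat.choose_eq_zero_of_lt (by omega)]
  simp

lemma mixedMoment_top (i : ℕ) : mixedMoment i (i + 5) = 1 := by
  unfold mixedMoment
  rw [Nat.choose_eq_zero_of_lt (by omega : 2 * i + 5 < i + (i + 5) + 7),
    show i + (i + 5) = 2 * i + 5 by ring, Nat.choose_self]
  simp

lemma mixedMoment_zero_right (i : ℕ) : mixedMoment i 0 = catalanConv 7 i := by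
  unfold mixedMoment catalanConv
  symm
  apply Int.ediv_eq_of_eq_mul_right (by positivity)
  rcases i with _ | _ | k
  · decide
  · decide
  have h3 : (2 * (k + 2) + 5).choose (k + 2 + 0 + 7) = (2 * (k + 2) + 5).choose k :=
    Nat.choose_symm_of_eq_add (by ring)
  rw [show k + 1 + 1 = k + 2 by ring, h3, show 2 * (k + 2) + 7 = 2 * (k + 2) + 5 + 2 by ring]
  have h1 := Nat.choose_succ_right_eq (2 * (k + 2) + 5) k
  have h2 := Nat.choose_succ_right_eq (2 * (k + 2) + 5) (k + 1)
  rw [show 2 * (k + 2) + 5 - k = k + 9 by omega] at h1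
  rw [show 2 * (k + 2) + 5 - (k + 1) = k + 8 by omega] at h2
  zify at h1 h2
  push_cast
  rw [choose_add_two_s4]
  linear_combination -2 * h2 - 2 * h1

/-- The coefficients of the Chebyshev polynomial `u_j`: a unitriangular change of basis
expressing the mixed moments through the moments. -/
lemma exists_chebyshev_coeff (j : ℕ) : ∃ c : ℕ → ℤ, c j = 1 ∧ (∀ k, j < k → c k = 0) ∧
    ∀ i n, j < n → mixedMoment i j = ∑ k ∈ range n, catalanConv 7 (i + k) * c k := by
  induction j using Nat.twoStepInduction with
  | zero =>
    refine ⟨fun k => if k = 0 then 1 else 0, by simp, fun k hk => by simp; omega, ?_⟩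
    intro i n hn
    simp [mixedMoment_zero_right, hn.ne']
  | one =>
    refine ⟨fun k => if k = 0 then -2 else if k = 1 then 1 else 0, by simp,
      fun k hk => by simp; omega, ?_⟩
    intro i n hn
    obtain ⟨n, rfl⟩ : ∃ m, n = m + 2 := ⟨n - 2, by omega⟩
    rw [sum_range_succ', sum_range_succ']
    simp
    have := mixedMoment_succ_zero i
    rw [mixedMoment_zero_right, mixedMoment_zero_right] at this
    linarith
  | more j ih0 ih1 =>
    obtain ⟨c0, h01, h02, h03⟩ := ih0
    obtain ⟨c1, h11, h12, h13⟩ := ih1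
    refine ⟨fun k => (if k = 0 then 0 else c1 (k - 1)) - 2 * c1 k - c0 k, ?_, ?_, ?_⟩
    · simp [h11, h12, h02]
    · intro k hk
      simp only
      rw [if_neg (by omega), h12 _ (by omega), h12 _ (by omega), h02 _ (by omega)]
      simp
    · intro i n hn
      obtain ⟨n, rfl⟩ : ∃ m, n = m + 1 := ⟨n - 1, by omega⟩
      have e1 := h13 (i + 1) n (by omega)
      have e2 := h13 i (n + 1) (by omega)
      have e3 := h03 i (n + 1) (by omega)
      have e4 := mixedMoment_succ_succ i j
      have e5 : ∑ k ∈ range (n + 1), catalanConv 7 (i + k) * (if k = 0 then 0 else c1 (k - 1)) =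
          ∑ k ∈ range n, catalanConv 7 (i + 1 + k) * c1 k := by
        rw [sum_range_succ']
        simp [add_assoc, add_comm 1]
      simp only [mul_sub, sum_sub_distrib, e5, ← e1, ← e3]
      simp only [mul_left_comm _ (2 : ℤ), ← mul_sum, ← e2]
      linarith

lemma hankel_eq_leadingMinor_mixedMoment (N : ℕ) :
    hankel (catalanConv 7) N = leadingMinor mixedMoment N := by
  choose c h1 h2 h3 using exists_chebyshev_coeff
  have hU : leadingMinor (fun k j => c j k) N = 1 :=
    leadingMinor_eq_one_of_upper (fun i j hij => h2 _ _ hij) h1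
  have hH : hankel (catalanConv 7) N = leadingMinor (fun i j => catalanConv 7 (i + j)) N := rfl
  rw [hH, ← mul_one (leadingMinor _ N), ← hU, leadingMinor_mul]
  exact leadingMinor_congr fun i j _ hj => (h3 j i N hj).symm

/-! ### Null sequences and reduction to a `5 × 5` determinant -/

/-- Odd sequences on `ℤ` that become 7-periodic after four applications of `1 + shift`. They
form the null space of the matrix `mixedMoment` (column `j` corresponds to the index `j + 1`). -/
def IsNull (X : ℤ → ℤ) : Prop :=
  (∀ e, X (-e) = -X e) ∧
  ∀ e, X (e + 7) + 4 * X (e + 8) + 6 * X (e + 9) + 4 * X (e + 10) + X (e + 11) =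
    X e + 4 * X (e + 1) + 6 * X (e + 2) + 4 * X (e + 3) + X (e + 4)

lemma IsNull.step {X : ℤ → ℤ} (h : IsNull X) :
    IsNull fun e => X (e - 1) + 2 * X e + X (e + 1) := by
  refine ⟨fun e => ?_, fun e => ?_⟩
  · have h1 := h.1 (e + 1)
    have h2 := h.1 (e - 1)
    have h3 := h.1 e
    simp only
    rw [show -e - 1 = -(e + 1) by ring, show -e + 1 = -(e - 1) by ring]
    linarith
  · have h1 := h.2 (e - 1)
    have h2 := h.2 e
    have h3 := h.2 (e + 1)
    ring_nf at *
    linarith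

/-- Summation by parts for the second-order difference operator `X(e-1) + 2X(e) + X(e+1)`. -/
lemma sum_by_parts_s4 (h : ℕ → ℤ) (X : ℤ → ℤ) (J : ℕ) :
    (h 1 + 2 * h 0) * X 1 +
      ∑ j ∈ range J, (h (j + 2) + 2 * h (j + 1) + h j) * X ((j + 2 : ℕ) : ℤ) =
    ∑ j ∈ range (J + 1), h j * (X (((j + 1 : ℕ) : ℤ) - 1) + 2 * X ((j + 1 : ℕ) : ℤ)
      + X (((j + 1 : ℕ) : ℤ) + 1))
      + h (J + 1) * X (J + 1 : ℕ) - h J * X (J + 2 : ℕ) - h 0 * X 0 := by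
  induction J with
  | zero => simp; ring_nf
  | succ J ih =>
    rw [sum_range_succ, sum_range_succ _ (J + 1), ← add_assoc, ih]
    push_cast
    ring_nf

/-- Null sequences are annihilated by every row of `mixedMoment`. -/
lemma IsNull.sum_eq_zero {X : ℤ → ℤ} (hX : IsNull X) (i J : ℕ) (hJ : i + 6 ≤ J) :
    ∑ j ∈ range J, mixedMoment i j * X ((j + 1 : ℕ) : ℤ) = 0 := by
  induction i generalizing X J with
  | zero =>
    obtain ⟨J, rfl⟩ : ∃ m, J = 6 + m := ⟨J - 6, by omega⟩
    rw [sum_range_add, Finset.sum_eq_zero (s := range J)]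
    · have h := hX.2 (-5)
      have o1 := hX.1 1
      have o2 := hX.1 2
      have o3 := hX.1 3
      have o4 := hX.1 4
      have o5 := hX.1 5
      norm_num at h o1 o2 o3 o4 o5
      simp [sum_range_succ, mixedMoment, Nat.choose]
      linarith
    · intro j _
      rw [mixedMoment_eq_zero (by omega)]
      simp
  | succ i ih =>
    obtain ⟨J, rfl⟩ : ∃ m, J = m + 1 := ⟨J - 1, by omega⟩
    have h0 : X 0 = 0 := by have := hX.1 0; simp at this; omega
    have := sum_by_parts_s4 (mixedMoment i) X J
    rw [ih hX.step (J + 1) (by omega), h0, mixedMoment_eq_zero (by omega : i + 5 < J),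
      mixedMoment_eq_zero (by omega : i + 5 < J + 1)] at this
    rw [sum_range_succ', mixedMoment_succ_zero]
    simp only [mixedMoment_succ_succ]
    simp at this ⊢
    ring_nf at this ⊢
    linarith

/-- Five null sequences `X` turn an `N × N` minor of `mixedMoment` into a `5 × 5` determinant:
the `(N+5) × (N+5)` matrix made of `N` rows of `mixedMoment` and `5` rows of the identity is
multiplied by the matrix whose first five columns are `X` and whose other columns are unit vectors,
and, after a cyclic column shift, the product is block lower triangular. -/
lemma leadingMinor_mixedMoment_mul (X : ℕ → ℤ → ℤ) (hX : ∀ a, a < 5 → IsNull (X a)) (N : ℕ) :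
    leadingMinor mixedMoment N * leadingMinor (fun b a => X a ((b + 1 : ℕ) : ℤ)) 5 =
      (-1) ^ N * leadingMinor (fun b a => X a ((N + b + 1 : ℕ) : ℤ)) 5 := by
  set A : ℕ → ℕ → ℤ := fun i j => if i < N then mixedMoment i j else if i = j then 1 else 0 with hA
  set B : ℕ → ℕ → ℤ := fun i j => if j < 5 then X j ((i + 1 : ℕ) : ℤ) else if i = j then 1 else 0
    with hB
  have dA : leadingMinor A (N + 5) = leadingMinor mixedMoment N := by
    rw [leadingMinor_add_of_upper, leadingMinor_eq_one_of_lower (n := 5), mul_one]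
    · exact leadingMinor_congr fun i j hi _ => by simp [hA, hi]
    · intro i j hij; simp [hA, hij.ne]
    · intro i; simp [hA]
    · intro i j h1 h2 h3; simp only [hA]; rw [if_neg (by omega), if_neg (by omega)]
  have dB : leadingMinor B (N + 5) = leadingMinor (fun b a => X a ((b + 1 : ℕ) : ℤ)) 5 := by
    rw [add_comm N 5, leadingMinor_add_of_lower, leadingMinor_eq_one_of_lower (n := N), mul_one]
    · exact leadingMinor_congr fun i j _ hj => by simp [hB, hj]
    · intro i j hij; simp [hB, hij.ne]
    · intro i; simp [hB]
    · intro i j h1 h2 h3; simp only [hB]; rw [if_neg (by omega), if_neg (by omega)]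
  -- the entries of `A * B`
  set C : ℕ → ℕ → ℤ := fun i j => ∑ l ∈ range (N + 5), A i l * B l j with hC
  have hC1 : ∀ i j, i < N → j < 5 → C i j = 0 := by
    intro i j hi hj
    simp only [hC, hA, hB, if_pos hi, if_pos hj]
    exact (hX j hj).sum_eq_zero i _ (by omega)
  have hC2 : ∀ i j, i < N → 5 ≤ j → j < N + 5 → C i j = mixedMoment i j := by
    intro i j hi hj hj'
    simp only [hC, hA, hB, if_pos hi, if_neg (not_lt.2 hj)]
    simp
    omega
  have hC3 : ∀ i j, N ≤ i → i < N + 5 → C i j = B i j := by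
    intro i j hi hi'
    simp only [hC, hA, if_neg (not_lt.2 hi)]
    simp
    omega
  have dC : leadingMinor (fun i j => C i ((j + 5) % (N + 4 + 1))) (N + 5) =
      leadingMinor (fun b a => X a ((N + b + 1 : ℕ) : ℤ)) 5 := by
    rw [leadingMinor_add_of_lower]
    · rw [leadingMinor_congr (G := fun i j => mixedMoment i (j + 5)) (n := N),
        leadingMinor_eq_one_of_lower (n := N), one_mul]
      · refine leadingMinor_congr fun i j hi hj => ?_
        rw [show (N + j + 5) % (N + 4 + 1) = j by
          rw [show N + j + 5 = j + (N + 4 + 1) by ring, Nat.add_mod_right]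
          exact Nat.mod_eq_of_lt (by omega)]
        rw [hC3 _ _ (by omega) (by omega)]
        simp [hB, hj]
      · intro i j hij; exact mixedMoment_eq_zero (by omega)
      · exact mixedMoment_top
      · intro i j hi hj
        rw [Nat.mod_eq_of_lt (by omega)]
        exact hC2 _ _ hi (by omega) (by omega)
    · intro i j hi hj hj'
      apply hC1 _ _ hi
      rw [show j + 5 = (j - N) + (N + 4 + 1) by omega, Nat.add_mod_right]
      rw [Nat.mod_eq_of_lt (by omega)]
      omega
  have hsign : (((-1 : ℤ)) ^ (N + 4)) ^ 5 = (-1) ^ N := by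
    rcases Nat.even_or_odd N with h | h
    · simp [h.neg_one_pow, pow_add]
    · simp [h.neg_one_pow, pow_add]
  have key := leadingMinor_rotate C (N + 4) 5
  rw [hsign] at key
  rw [← dA, ← dB, leadingMinor_mul, ← dC, key, ← mul_assoc, ← pow_add, ← two_mul]
  simp [hC]

/-! ### The explicit null sequences and their determinants -/

/-- The odd 7-periodic sequence supported on the residue classes `±a` modulo `7`. -/
def oddPeriodic (a e : ℤ) : ℤ := if e % 7 = a then 1 else if e % 7 = 7 - a then -1 else 0

/-- Five independent null sequences: three odd 7-periodic ones, `(-1)^e e` and `(-1)^e e^3`. -/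
def nullSeq (a : ℕ) (e : ℤ) : ℤ :=
  if a < 3 then oddPeriodic (a + 1) e
  else if a = 3 then (e.negOnePow : ℤ) * e else (e.negOnePow : ℤ) * e ^ 3

lemma isNull_oddPeriodic (a : ℤ) (h0 : 0 < a) (h1 : a < 4) : IsNull (oddPeriodic a) := by
  have hp : ∀ e, oddPeriodic a (e + 7) = oddPeriodic a e := by
    intro e; simp [oddPeriodic]
  refine ⟨fun e => ?_, fun e => ?_⟩
  · unfold oddPeriodic
    split_ifs <;> omega
  · rw [← hp e, ← hp (e + 1), ← hp (e + 2), ← hp (e + 3), ← hp (e + 4)]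
    ring_nf

lemma isNull_nullSeq (a : ℕ) (ha : a < 5) : IsNull (nullSeq a) := by
  have hs : ∀ (e : ℤ) (k : ℕ), ((e + k).negOnePow : ℤ) = (-1) ^ k * (e.negOnePow : ℤ) := by
    intro e k
    rw [Int.negOnePow_add, Units.val_mul, Int.coe_negOnePow_natCast, mul_comm]
  by_cases h3 : a < 3
  · have : nullSeq a = oddPeriodic (a + 1) := by
      funext e; simp [nullSeq, h3]
    rw [this]
    exact isNull_oddPeriodic _ (by omega) (by omega)
  -- in the remaining two cases four applications of `1 + shift` give zero
  · refine ⟨fun e => by by_cases h4 : a = 3 <;> simp [nullSeq, h3, h4]; ring, fun e => ?_⟩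
    have g1 := hs e 1
    have g2 := hs e 2
    have g3 := hs e 3
    have g4 := hs e 4
    have g7 := hs e 7
    have g8 := hs e 8
    have g9 := hs e 9
    have g10 := hs e 10
    have g11 := hs e 11
    push_cast at g1 g2 g3 g4 g7 g8 g9 g10 g11
    by_cases h4 : a = 3 <;> simp [nullSeq, h3, h4, g1, g2, g3, g4, g7, g8, g9, g10, g11] <;> ring

lemma nullSeq_eval (a n c : ℕ) : nullSeq a ((7 * n + c : ℕ) : ℤ) =
    if a < 3 then oddPeriodic (a + 1) c
    else (-1) ^ n * (-1) ^ c * (7 * n + c) ^ (if a = 3 then 1 else 3) := by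
  have hp : oddPeriodic (a + 1) ((7 * n + c : ℕ) : ℤ) = oddPeriodic (a + 1) c := by
    simp [oddPeriodic]
  have hs : ((((7 * n + c : ℕ) : ℤ)).negOnePow : ℤ) = (-1) ^ n * (-1) ^ c := by
    rw [Int.coe_negOnePow_natCast, pow_add, pow_mul]
    norm_num
  unfold nullSeq
  rw [hp, hs]
  split_ifs <;> push_cast <;> ring

/-- `hankel (catalanConv 7)` as a `5 × 5` determinant; `-6` is the determinant of the null
sequences at the indices `1, …, 5`. -/
lemma neg_six_mul_hankel (n k : ℕ) :
    -6 * hankel (catalanConv 7) (7 * n + k) = (-1) ^ n * (-1) ^ k *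
      leadingMinor (fun b a => if a < 3 then oddPeriodic (a + 1) ((k + b + 1 : ℕ) : ℤ)
        else (-1) ^ n * (-1) ^ (k + b + 1) *
          (7 * n + (k + b + 1 : ℕ)) ^ (if a = 3 then 1 else 3)) 5 := by
  have h := leadingMinor_mixedMoment_mul nullSeq isNull_nullSeq (7 * n + k)
  have h5 : leadingMinor (fun b a => nullSeq a ((b + 1 : ℕ) : ℤ)) 5 = -6 := by
    have : ∀ a b : ℕ, nullSeq a ((b + 1 : ℕ) : ℤ) = if a < 3 then oddPeriodic (a + 1) (b + 1 : ℕ)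
        else (-1) ^ (b + 1) * ((b + 1 : ℕ) : ℤ) ^ (if a = 3 then 1 else 3) := by
      intro a b
      have := nullSeq_eval a 0 (b + 1)
      simpa using this
    simp only [this]
    simp [leadingMinor, Matrix.det_succ_row_zero, Fin.sum_univ_succ, oddPeriodic, Fin.succAbove]
  rw [h5] at h
  rw [hankel_eq_leadingMinor_mixedMoment, mul_comm, h, pow_add, pow_mul,
    show ((-1 : ℤ)) ^ 7 = -1 by norm_num]
  refine congrArg _ (leadingMinor_congr fun b a _ _ => ?_)
  rw [show 7 * n + k + b + 1 = 7 * n + (k + b + 1) by ring, nullSeq_eval]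

end

set_option maxHeartbeats 1000000 in
theorem hankel_catalanConv_seven (n : ℕ) :
    (hankel (catalanConv 7) (7 * n) : ℚ) = (-1) ^ n ∧
    (hankel (catalanConv 7) (7 * n + 1) : ℚ) = (-1) ^ n ∧
    (hankel (catalanConv 7) (7 * n + 2) : ℚ) =
      (-1) ^ n * (7 / 6 * (n + 1) * (98 * (n : ℚ) ^ 2 + 49 * n - 12)) ∧
    (hankel (catalanConv 7) (7 * n + 3) : ℚ) = (-1) ^ (n + 1) * (49 * (n + 1) ^ 2) ∧
    (hankel (catalanConv 7) (7 * n + 4) : ℚ) = 0 ∧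
    (hankel (catalanConv 7) (7 * n + 5) : ℚ) = (-1) ^ n * (49 * (n + 1) ^ 2) ∧
    (hankel (catalanConv 7) (7 * n + 6) : ℚ) =
      (-1) ^ n * (7 / 6 * (n + 1) * (98 * (n : ℚ) ^ 2 + 343 * n + 282)) := by
  refine ⟨?_, ?_, ?_, ?_, ?_, ?_, ?_⟩
  · have h := congrArg (Int.cast : ℤ → ℚ) (neg_six_mul_hankel n 0)
    simp [leadingMinor, Matrix.det_succ_row_zero, Fin.sum_univ_succ, oddPeriodic,
      Fin.succAbove] at h
    -- for each value of the sign `(-1)^n`, what remains is a polynomial identity in `n`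
    rcases neg_one_pow_eq_or ℚ n with e | e <;> simp only [e, pow_succ] at h ⊢ <;> linarith
  · have h := congrArg (Int.cast : ℤ → ℚ) (neg_six_mul_hankel n 1)
    simp [leadingMinor, Matrix.det_succ_row_zero, Fin.sum_univ_succ, oddPeriodic,
      Fin.succAbove] at h
    rcases neg_one_pow_eq_or ℚ n with e | e <;> simp only [e, pow_succ] at h ⊢ <;> linarith
  · have h := congrArg (Int.cast : ℤ → ℚ) (neg_six_mul_hankel n 2)
    simp [leadingMinor, Matrix.det_succ_row_zero, Fin.sum_univ_succ, oddPeriodic,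
      Fin.succAbove] at h
    rcases neg_one_pow_eq_or ℚ n with e | e <;> simp only [e, pow_succ] at h ⊢ <;> linarith
  · have h := congrArg (Int.cast : ℤ → ℚ) (neg_six_mul_hankel n 3)
    simp [leadingMinor, Matrix.det_succ_row_zero, Fin.sum_univ_succ, oddPeriodic,
      Fin.succAbove] at h
    rcases neg_one_pow_eq_or ℚ n with e | e <;> simp only [e, pow_succ] at h ⊢ <;> linarith
  · have h := congrArg (Int.cast : ℤ → ℚ) (neg_six_mul_hankel n 4)
    simp [leadingMinor, Matrix.det_succ_row_zero, Fin.sum_univ_succ, oddPeriodic,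
      Fin.succAbove] at h
    exact_mod_cast h
  · have h := congrArg (Int.cast : ℤ → ℚ) (neg_six_mul_hankel n 5)
    simp [leadingMinor, Matrix.det_succ_row_zero, Fin.sum_univ_succ, oddPeriodic,
      Fin.succAbove] at h
    rcases neg_one_pow_eq_or ℚ n with e | e <;> simp only [e, pow_succ] at h ⊢ <;> linarith
  · have h := congrArg (Int.cast : ℤ → ℚ) (neg_six_mul_hankel n 6)
    simp [leadingMinor, Matrix.det_succ_row_zero, Fin.sum_univ_succ, oddPeriodic,
      Fin.succAbove] at h
    rcases neg_one_pow_eq_or ℚ n with e | e <;> simp only [e, pow_succ] at h ⊢ <;> linarith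
end

section
/- For every natural number n: H_{4n}(F(x,8)) = (n+1)^3, H_{4n+1}(F(x,8)) = (n+1)^3, H_{4n+2}(F(x,8)) = (2/45)·(n+1)^2 (n+2)(2n+3)(64n^2+32n−75), and H_{4n+3}(F(x,8)) = −(2/45)·(n+1)(n+2)^2 (2n+3)(64n^2+352n+405). -/
/-!
The numbers `catalanConv 8 k` are moments of a polynomial modification of the semicircle law: if `M`
denotes integration against that law, so that the monic Chebyshev polynomials of the second kind
`s k` are orthonormal for `M`, then `catalanConv 8 k = M ((X + 2) ^ k * W)` with
`W = (X + 2) ^ 3 * s 3` (`catalanConv_eight`).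

Christoffel's formula then describes the orthogonal polynomials for the weight `W`.  Whenever a
combination `F = ∑ dₖ s (n + k)`, `0 ≤ k ≤ 6`, is divisible by `W`, the quotient `F / W` has degree
at most `n` with `n`-th coefficient `d₆`, is orthogonal for the weight `W` to all polynomials of
degree `< n`, and pairs to `d₀` with `(X + 2) ^ n`.  By Cramer's rule the consecutive Hankel
determinants satisfy `d₆ H (n + 1) = d₀ H n` (`hankel_step`).

It remains to find the `dₖ`.  Divisibility by `s 3` holds once `F` is a combination of `s (4m + 3)`
and `s (4m + 7)`, both multiples of `s 3` (`s_three_dvd`); for each residue of `n` modulo `4` this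
leaves four free coefficients.  Divisibility by `(X + 2) ^ 3` amounts to the vanishing of the
alternating moments `∑ (-1)ᵏ dₖ (n + k + 1) ^ e`, `e = 1, 3, 5` (`W_dvd`), three linear equations
whose solution, unique up to scaling, is polynomial in `m`.  Multiplying the four resulting ratios
gives the closed formulas by induction (`hankel_period`); the ratios never degenerate because
`64 m ^ 2 + 32 m - 75` is odd.
-/

/-! ### Chebyshev polynomials and the semicircle functional -/

open Polynomial in
/-- The monic Chebyshev polynomial of the second kind: `s k (2 cos θ) = sin ((k+1)θ) / sin θ`. -/
noncomputable def s (k : ℕ) : ℚ[X] := Chebyshev.S ℚ k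

section

open Polynomial

lemma s_zero : s 0 = 1 := by simp [s]

lemma s_one : s 1 = X := by simp [s]

lemma s_add_two (k : ℕ) : s (k + 2) = X * s (k + 1) - s k := by
  simp [s]

lemma s_monic_natDegree (k : ℕ) : (s k).Monic ∧ (s k).natDegree = k := by
  induction k using Nat.twoStepInduction with
  | zero => simp [s_zero]
  | one => simp [s_one, monic_X]
  | more k h0 h1 =>
    have hm : (X * s (k + 1)).Monic := monic_X.mul h1.1
    have hd : (X * s (k + 1)).natDegree = k + 2 := by
      rw [natDegree_X_mul h1.1.ne_zero, h1.2]
    have hlt : (s k).degree < (X * s (k + 1)).degree := by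
      rw [degree_eq_natDegree h0.1.ne_zero, degree_eq_natDegree hm.ne_zero, hd, h0.2]
      exact_mod_cast (by omega : k < k + 2)
    rw [s_add_two]
    exact ⟨hm.sub_of_left hlt, by
      rw [natDegree_eq_of_degree_eq (degree_sub_eq_left_of_degree_lt hlt), hd]⟩

/-- The Chebyshev polynomials as a polynomial sequence (one polynomial in each degree). -/
noncomputable def sSeq : Polynomial.Sequence ℚ where
  elems' := s
  degree_eq' k := by
    rw [degree_eq_natDegree (s_monic_natDegree k).1.ne_zero, (s_monic_natDegree k).2]

/-- The linear functional with `M (s 0) = 1` and `M (s k) = 0` for `k > 0`, that is, integration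
against the semicircle law on `[-2, 2]`. -/
noncomputable def M : ℚ[X] →ₗ[ℚ] ℚ :=
  (sSeq.basis fun k => by
    have : (sSeq k).leadingCoeff = 1 := (s_monic_natDegree k).1
    rw [this]; exact isUnit_one).coord 0

lemma M_s (k : ℕ) : M (s k) = if k = 0 then 1 else 0 := by
  have h : s k = (sSeq.basis fun k => by
    have : (sSeq k).leadingCoeff = 1 := (s_monic_natDegree k).1
    rw [this]; exact isUnit_one) k := by
      rw [Sequence.basis_eq_self]; rfl
  rw [h, M, Module.Basis.coord_apply, Module.Basis.repr_self, Finsupp.single_apply]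

/-- Pascal's rule applied twice. -/
lemma choose_two_mul_succ (m k : ℕ) : (2 * (m + 1)).choose (k + 2) =
    (2 * m).choose (k + 2) + 2 * (2 * m).choose (k + 1) + (2 * m).choose k := by
  rw [show 2 * (m + 1) = (2 * m + 1) + 1 by ring, Nat.choose_succ_succ' (2 * m + 1),
    Nat.choose_succ_succ' (2 * m), Nat.choose_succ_succ' (2 * m)]
  ring

/-- The moments of `M` against `(X + 2) ^ i * s k` count ballot paths. -/
lemma M_pow_mul_s (i k : ℕ) : M ((X + 2) ^ i * s k) =
    ((2 * i).choose (i + k) : ℚ) - (2 * i).choose (i + k + 2) := by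
  induction i generalizing k with
  | zero =>
    rw [pow_zero, one_mul, M_s]
    rcases k with _ | k
    · simp
    · simp
  | succ i ih =>
    rcases k with _ | k
    · have e : (X + 2) ^ (i + 1) * s 0 = (X + 2) ^ i * s 1 + (2 : ℚ) • ((X + 2) ^ i * s 0) := by
        rw [s_zero, s_one, smul_eq_C_mul, map_ofNat]; ring
      rw [e, map_add, map_smul, ih, ih]
      rcases i with _ | i
      · norm_num [Nat.choose]
      · have h1 := choose_two_mul_succ (i + 1) i
        have h2 := choose_two_mul_succ (i + 1) (i + 2)
        have h3 : (2 * (i + 1)).choose i = (2 * (i + 1)).choose (i + 2) :=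
          Nat.choose_symm_of_eq_add (by ring)
        rw [show i + 1 + 1 + 0 = i + 2 by ring, show i + 2 + 2 = i + 2 + 2 by ring, h1, h2, h3]
        simp only [add_assoc, Nat.reduceAdd, smul_eq_mul, add_zero]
        push_cast
        ring
    · have e : (X + 2) ^ (i + 1) * s (k + 1) = (X + 2) ^ i * s (k + 2)
          + (2 : ℚ) • ((X + 2) ^ i * s (k + 1)) + (X + 2) ^ i * s k := by
        rw [s_add_two, smul_eq_C_mul, map_ofNat]; ring
      rw [e, map_add, map_add, map_smul, ih, ih, ih]
      have h1 := choose_two_mul_succ i (i + k)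
      have h2 := choose_two_mul_succ i (i + k + 2)
      rw [show i + 1 + (k + 1) = i + k + 2 by ring, h1, h2,
        show i + (k + 2) = i + k + 2 by ring, show i + (k + 1) = i + k + 1 by ring]
      push_cast
      simp only [smul_eq_mul, add_assoc, Nat.reduceAdd]
      ring

/-! ### Convolved Catalan numbers as moments -/

/-- The polynomial weight `(X + 2)³ s₃`: multiplying the semicircle law by it gives the functional
whose moments in the variable `X + 2` are the numbers `catalanConv 8 k`. -/
noncomputable def W : ℚ[X] := (X + 2) ^ 3 * (X * (X ^ 2 - 2))

lemma W_eq : W = (X + 2) ^ 3 * s 3 := by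
  rw [W, s_add_two 1, s_add_two 0, s_one, s_zero]; ring

lemma W_monic_natDegree : W.Monic ∧ W.natDegree = 6 := by
  have h : (X + 2 : ℚ[X]) = X + C 2 := by rw [map_ofNat]
  have h3 := s_monic_natDegree 3
  have hm : ((X + 2 : ℚ[X]) ^ 3).Monic := by rw [h]; exact (monic_X_add_C 2).pow 3
  refine ⟨W_eq ▸ hm.mul h3.1, ?_⟩
  rw [W_eq, hm.natDegree_mul h3.1, h3.2, h, (monic_X_add_C _).natDegree_pow, natDegree_X_add_C]

lemma catalanConv_eight (k : ℕ) : (catalanConv 8 k : ℚ) = M ((X + 2) ^ k * W) := by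
  rw [W_eq, ← mul_assoc, ← pow_add, M_pow_mul_s]
  have key : 8 * ((2 * k + 8).choose k : ℤ) =
      (2 * k + 8) * ((2 * (k + 3)).choose (k + 3 + 3) - (2 * (k + 3)).choose (k + 3 + 3 + 2)) := by
    rcases k with _ | _ | j
    · decide
    · decide
    · have e1 : (2 * (j + 2 + 3)).choose (j + 2 + 3 + 3) = (2 * j + 10).choose (j + 2) :=
        Nat.choose_symm_of_eq_add (by ring)
      have e2 : (2 * (j + 2 + 3)).choose (j + 2 + 3 + 3 + 2) = (2 * j + 10).choose j :=
        Nat.choose_symm_of_eq_add (by ring)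
      have e3 := choose_two_mul_succ (j + 5) j
      have r1 := Nat.choose_succ_right_eq (2 * j + 10) j
      have r2 := Nat.choose_succ_right_eq (2 * j + 10) (j + 1)
      rw [show 2 * j + 10 - j = j + 10 by omega] at r1
      rw [show 2 * j + 10 - (j + 1) = j + 9 by omega] at r2
      rw [show 2 * (j + 1 + 1) + 8 = 2 * (j + 5 + 1) by ring, e3, e1, e2,
        show 2 * (j + 5) = 2 * j + 10 by ring]
      zify at r1 r2
      push_cast
      linear_combination -2 * r2 - 2 * r1
  have : catalanConv 8 k =
      ((2 * (k + 3)).choose (k + 3 + 3) - (2 * (k + 3)).choose (k + 3 + 3 + 2) : ℤ) := by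
    unfold catalanConv
    push_cast
    rw [key]
    exact Int.mul_ediv_cancel_left _ (by positivity)
  rw [this]; push_cast; ring

/-! ### Consecutive Hankel determinants and Christoffel's formula -/

/-- If `v` solves the linear system `A v = h eₙ` for the Hankel matrix `A` of size `n + 1`, then
Cramer's rule at the last coordinate relates consecutive Hankel determinants. -/
lemma hankel_succ_of_mulVec (a : ℕ → ℤ) (n : ℕ) (v : ℕ → ℚ) (h : ℚ)
    (hv : ∀ i ≤ n, ∑ j ∈ Finset.range (n + 1), (a (i + j) : ℚ) * v j = if i = n then h else 0) :
    v n * (hankel a (n + 1) : ℚ) = h * hankel a n := by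
  set A : Matrix (Fin (n + 1)) (Fin (n + 1)) ℚ :=
    Matrix.of fun i j => (a (i.val + j.val) : ℚ) with hA
  have hdet (m : ℕ) : (hankel a m : ℚ) =
      (Matrix.of fun i j : Fin m => (a (i.val + j.val) : ℚ)).det := by
    rw [hankel, Int.cast_det]; rfl
  have hAv : A.mulVec (fun j => v j) = h • Pi.single (Fin.last n) 1 := by
    ext i
    have := hv i (by omega)
    rw [Finset.sum_range (fun j => (a (i + j) : ℚ) * v j)] at this
    simp only [Matrix.mulVec, dotProduct, hA, Matrix.of_apply, this, Pi.smul_apply,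
      Pi.single_apply, Fin.ext_iff, Fin.val_last, smul_eq_mul]
    split_ifs <;> simp
  have h1 : A.adjugate.mulVec (A.mulVec (fun j => v j)) = A.det • fun j : Fin (n + 1) => v j := by
    rw [Matrix.mulVec_mulVec, Matrix.adjugate_mul, Matrix.smul_mulVec, Matrix.one_mulVec]
  have h2 := congrFun h1 (Fin.last n)
  rw [hAv, Matrix.mulVec_smul] at h2
  simp only [Pi.smul_apply, Matrix.mulVec_single_one, Matrix.col_apply, smul_eq_mul,
    Fin.val_last, Matrix.adjugate_fin_succ_eq_det_submatrix, Fin.succAbove_last] at h2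
  rw [hdet, hdet, mul_comm, ← h2, ← two_mul, pow_mul, neg_one_sq, one_pow, one_mul]
  rfl

/-- Christoffel's formula: if the combination `∑ dₖ s (n+k)` is divisible by the weight `W`, the
quotient has degree at most `n`, is orthogonal to all lower degrees for the weight `W`, has `n`-th
coefficient `d₆`, and has `d₀` as pairing with `(X + 2) ^ n`. -/
lemma hankel_step (n : ℕ) (d : Fin 7 → ℚ) (hd : W ∣ ∑ k : Fin 7, C (d k) * s (n + k)) :
    d 6 * (hankel (catalanConv 8) (n + 1) : ℚ) = d 0 * hankel (catalanConv 8) n := by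
  obtain ⟨q, hq⟩ := hd
  set F := ∑ k : Fin 7, C (d k) * s (n + k) with hF
  have hFdeg : F.natDegree ≤ n + 6 := by
    refine natDegree_sum_le_of_forall_le _ _ fun k _ => ?_
    refine (natDegree_C_mul_le _ _).trans ?_
    rw [(s_monic_natDegree _).2]; omega
  have hqdeg : q.natDegree ≤ n := by
    by_cases h0 : q = 0
    · simp [h0]
    · rw [hq, W_monic_natDegree.1.natDegree_mul' h0, W_monic_natDegree.2] at hFdeg
      omega
  have hFc : F.coeff (n + 6) = d 6 := by
    rw [hF, finsetSum_coeff, Finset.sum_eq_single 6]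
    · have h := s_monic_natDegree (n + 6)
      have h' : (s (n + 6)).coeff (n + 6) = 1 := by
        have := h.1.coeff_natDegree
        rwa [h.2] at this
      rw [coeff_C_mul]
      change d 6 * (s (n + 6)).coeff (n + 6) = d 6
      rw [h', mul_one]
    · intro k _ hk
      rw [coeff_C_mul, coeff_eq_zero_of_natDegree_lt, mul_zero]
      rw [(s_monic_natDegree _).2]
      have : (k : ℕ) ≠ 6 := fun h => hk (Fin.ext h)
      omega
    · simp
  have hqc : q.coeff n = d 6 := by
    have h := coeff_mul_add_eq_of_natDegree_le W_monic_natDegree.2.le hqdeg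
    have hW : W.coeff 6 = 1 := by
      have := W_monic_natDegree.1.coeff_natDegree
      rwa [W_monic_natDegree.2] at this
    rw [← hq, add_comm, hFc, hW, one_mul] at h
    exact h.symm
  -- the coefficients of `q` in powers of `X + 2`
  set p := taylor (-2) q with hp
  have hpdeg : p.natDegree ≤ n := by rw [hp, natDegree_taylor]; exact hqdeg
  have hpc : p.coeff n = d 6 := by
    rcases hqdeg.lt_or_eq with hlt | heq
    · rw [← hqc, coeff_eq_zero_of_natDegree_lt hlt, coeff_eq_zero_of_natDegree_lt]
      rwa [hp, natDegree_taylor]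
    · rw [← hqc, ← heq, hp, coeff_taylor_natDegree, coeff_natDegree]
  have hqp : q = ∑ j ∈ Finset.range (n + 1), p.coeff j • (X + 2 : ℚ[X]) ^ j := by
    have h1 : q = taylor 2 p := by rw [hp, taylor_taylor]; norm_num
    rw [h1, p.as_sum_range_C_mul_X_pow' (Nat.lt_succ_of_le hpdeg), map_sum]
    refine Finset.sum_congr rfl fun j hj => ?_
    rw [taylor_mul, taylor_C, taylor_X_pow, smul_eq_C_mul]
    rw [← p.as_sum_range_C_mul_X_pow' (Nat.lt_succ_of_le hpdeg), map_ofNat]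
  rw [← hpc]
  refine hankel_succ_of_mulVec _ n (fun j => p.coeff j) (d 0) fun i hi => ?_
  have h1 : ∑ j ∈ Finset.range (n + 1), (catalanConv 8 (i + j) : ℚ) * p.coeff j
      = M ((X + 2) ^ i * F) := by
    rw [hq, hqp, Finset.mul_sum, Finset.mul_sum, map_sum]
    refine Finset.sum_congr rfl fun j _ => ?_
    have e : (X + 2) ^ i * (W * p.coeff j • (X + 2) ^ j) =
        p.coeff j • ((X + 2) ^ (i + j) * W) := by
      rw [mul_smul_comm, mul_smul_comm, pow_add]
      congr 1
      ring
    rw [e, map_smul, smul_eq_mul, mul_comm, catalanConv_eight]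
  have h2 : M ((X + 2) ^ i * F) = ∑ k : Fin 7, d k *
      (((2 * i).choose (i + (n + k)) : ℚ) - (2 * i).choose (i + (n + k) + 2)) := by
    rw [hF, Finset.mul_sum, map_sum]
    refine Finset.sum_congr rfl fun k _ => ?_
    have e : (X + 2) ^ i * (C (d k) * s (n + k)) = d k • ((X + 2) ^ i * s (n + k)) := by
      rw [smul_eq_C_mul]
      ring
    rw [e, map_smul, smul_eq_mul, M_pow_mul_s]
  rw [h1, h2, Finset.sum_eq_single 0]
  · rw [Nat.choose_eq_zero_of_lt (show 2 * i < i + (n + (0 : Fin 7)) + 2 by omega)]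
    split_ifs with h
    · subst h; simp [← two_mul]
    · rw [Nat.choose_eq_zero_of_lt (show 2 * i < i + (n + (0 : Fin 7)) by omega)]; simp
  · intro k _ hk
    have : (k : ℕ) ≠ 0 := fun h => hk (Fin.ext h)
    rw [Nat.choose_eq_zero_of_lt (by omega), Nat.choose_eq_zero_of_lt (by omega)]; simp
  · simp

/-! ### Divisibility by the weight -/

/-- Taylor expansion of `120 * s k` at `X = -2` to second order. -/
lemma pow_three_dvd (k : ℕ) : ∃ g : ℚ[X], 120 * s k =
    (-1) ^ k * (120 * ((k : ℚ[X]) + 1) - 20 * (((k : ℚ[X]) + 1) ^ 3 - ((k : ℚ[X]) + 1)) * (X + 2)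
      + (((k : ℚ[X]) + 1) ^ 5 - 5 * ((k : ℚ[X]) + 1) ^ 3 + 4 * ((k : ℚ[X]) + 1)) * (X + 2) ^ 2) + (X + 2) ^ 3 * g := by
  induction k using Nat.twoStepInduction with
  | zero => exact ⟨0, by rw [s_zero]; push_cast; ring⟩
  | one => exact ⟨0, by rw [s_one]; push_cast; ring⟩
  | more k h0 h1 =>
    obtain ⟨g0, h0⟩ := h0
    obtain ⟨g1, h1⟩ := h1
    refine ⟨X * g1 - g0 + (-1) ^ (k + 1) * (((k : ℚ[X]) + 2) ^ 5
      - 5 * ((k : ℚ[X]) + 2) ^ 3 + 4 * ((k : ℚ[X]) + 2)), ?_⟩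
    rw [s_add_two]
    push_cast at h0 h1 ⊢
    linear_combination X * h1 - h0

/-- Every `s (4m+3)` is a multiple of `s 3`. -/
lemma s_three_dvd (m : ℕ) : X * (X ^ 2 - 2) ∣ s (4 * m + 3) := by
  have e4 (k : ℕ) : s (k + 4) = (X ^ 3 - 2 * X) * s (k + 1) - (X ^ 2 - 1) * s k := by
    rw [s_add_two (k + 2), s_add_two (k + 1), s_add_two k]; ring
  induction m with
  | zero => exact ⟨1, by rw [mul_zero, zero_add, s_add_two 1, s_add_two 0, s_one, s_zero]; ring⟩
  | succ m ih =>
    rw [show 4 * (m + 1) + 3 = 4 * m + 3 + 4 by ring, e4]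
    exact dvd_sub (Dvd.intro (s (4 * m + 3 + 1)) (by ring)) (ih.mul_left _)

/-- Divisibility by `W` splits into the factor `s 3` and the vanishing of three Taylor coefficients
at `X = -2`, that is, of three odd power moments of the `dₖ`. -/
lemma W_dvd (n : ℕ) (d : Fin 7 → ℚ)
    (h : X * (X ^ 2 - 2) ∣ ∑ k : Fin 7, C (d k) * s (n + k))
    (hm : ∀ e ∈ ({1, 3, 5} : Finset ℕ),
      ∑ k : Fin 7, d k * (-1) ^ (k : ℕ) * ((n : ℚ) + k + 1) ^ e = 0) :
    W ∣ ∑ k : Fin 7, C (d k) * s (n + k) := by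
  refine IsCoprime.mul_dvd ?_ ?_ h
  · refine IsCoprime.pow_left ⟨C (1 / 4) * (X ^ 2 - 2 * X + 2), -C (1 / 4), ?_⟩
    have : (C (1 / 4) : ℚ[X]) * 4 = 1 := by
      rw [← map_ofNat C, ← map_mul]; norm_num
    linear_combination this
  · choose g hg using pow_three_dvd
    have h1 := congrArg (C : ℚ → ℚ[X]) (hm 1 (by simp))
    have h3 := congrArg (C : ℚ → ℚ[X]) (hm 3 (by simp))
    have h5 := congrArg (C : ℚ → ℚ[X]) (hm 5 (by simp))
    simp only [map_sum, map_mul, map_pow, map_neg, map_one, map_add, map_natCast, map_zero]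
      at h1 h3 h5
    have key : 120 * ∑ k : Fin 7, C (d k) * s (n + k) =
        (X + 2) ^ 3 * ∑ k : Fin 7, C (d k) * g (n + k) := by
      have : 120 * ∑ k : Fin 7, C (d k) * s (n + k) = ∑ k : Fin 7,
          ((-1 : ℚ[X]) ^ n * (120 - 20 * (-1) * (X + 2) + 4 * (X + 2) ^ 2) *
              (C (d k) * (-1) ^ (k : ℕ) * ((n : ℚ[X]) + ((k : ℕ) : ℚ[X]) + 1) ^ 1)
            + (-1 : ℚ[X]) ^ n * (-20 * (X + 2) - 5 * (X + 2) ^ 2) *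
              (C (d k) * (-1) ^ (k : ℕ) * ((n : ℚ[X]) + ((k : ℕ) : ℚ[X]) + 1) ^ 3)
            + (-1 : ℚ[X]) ^ n * (X + 2) ^ 2 *
              (C (d k) * (-1) ^ (k : ℕ) * ((n : ℚ[X]) + ((k : ℕ) : ℚ[X]) + 1) ^ 5)
            + (X + 2) ^ 3 * (C (d k) * g (n + k))) := by
        rw [Finset.mul_sum]
        refine Finset.sum_congr rfl fun k _ => ?_
        have := hg (n + k)
        push_cast at this
        linear_combination C (d k) * this
      rw [this]
      simp only [Finset.sum_add_distrib, ← Finset.mul_sum]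
      rw [h1, h3, h5]
      ring
    have : (C (1 / 120) : ℚ[X]) * 120 = 1 := by
      rw [← map_ofNat C, ← map_mul]; norm_num
    exact ⟨C (1 / 120) * ∑ k : Fin 7, C (d k) * g (n + k), by
      linear_combination C (1 / 120) * key - (∑ k : Fin 7, C (d k) * s (n + k)) * this⟩

lemma s_dvd_sum (n m : ℕ) (d : Fin 7 → ℚ) (A B : ℚ[X])
    (h : ∑ k : Fin 7, C (d k) * s (n + k) = A * s (4 * m + 3) + B * s (4 * (m + 1) + 3)) :
    X * (X ^ 2 - 2) ∣ ∑ k : Fin 7, C (d k) * s (n + k) :=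
  h ▸ dvd_add ((s_three_dvd m).mul_left A) ((s_three_dvd (m + 1)).mul_left B)

/-! ### The recursion in each residue class modulo 4 -/

/-- The identity `s (j - i) + s (j + i) = c i * s j`, where `c i` is `2 cos (iθ)` as a polynomial
in `X = 2 cos θ`, turns a combination symmetric about `j = 4m + 3` into a multiple of `s j`. The
next three lemmas use it about `4m + 3` and `4m + 7`. -/
lemma s_three_dvd_four_mul (m : ℕ) (c1 c2 c3 c6 : ℚ) : X * (X ^ 2 - 2) ∣
    ∑ k : Fin 7, C (![c6, c1, c2, c3, c2, c1, c6] k) * s (4 * m + k) := by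
  refine s_dvd_sum _ m _ (C c6 * (X ^ 3 - 3 * X) + C c1 * (X ^ 2 - 2) + C c2 * X + C c3) (0) ?_
  simp only [Fin.sum_univ_seven]
  simp [s_add_two, mul_add]
  ring

lemma s_three_dvd_four_mul_add_one (m : ℕ) (c0 c1 c2 c6 : ℚ) : X * (X ^ 2 - 2) ∣
    ∑ k : Fin 7, C (![c0, c1, c2, c1, c0, 0, c6] k) * s (4 * m + 1 + k) := by
  refine s_dvd_sum _ m _ (C c0 * (X ^ 2 - 2) + C c1 * X + C c2) (C c6) ?_
  simp only [Fin.sum_univ_seven]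
  simp [s_add_two, mul_add]
  ring

lemma s_three_dvd_four_mul_add_two (m : ℕ) (c0 c1 c5 c6 : ℚ) : X * (X ^ 2 - 2) ∣
    ∑ k : Fin 7, C (![c0, c1, c0, 0, c6, c5, c6] k) * s (4 * m + 2 + k) := by
  refine s_dvd_sum _ m _ (C c0 * X + C c1) (C c6 * X + C c5) ?_
  simp only [Fin.sum_univ_seven]
  simp [s_add_two, mul_add]
  ring

lemma s_three_dvd_four_mul_add_three (m : ℕ) (c0 c3 c4 c6 : ℚ) : X * (X ^ 2 - 2) ∣
    ∑ k : Fin 7, C (![c0, 0, c6, c3, c4, c3, c6] k) * s (4 * m + 3 + k) := by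
  refine s_dvd_sum _ m _ (C c0) (C c6 * (X ^ 2 - 2) + C c3 * X + C c4) ?_
  simp only [Fin.sum_univ_seven]
  simp [s_add_two, mul_add]
  ring

lemma hankel_step_four_mul (m : ℕ) :
    1 * (hankel (catalanConv 8) (4 * m + 1) : ℚ) =
      1 * hankel (catalanConv 8) (4 * m) := by
  refine hankel_step (4 * m)
    ![1, 6, 15, 20, 15, 6, 1]
    (W_dvd _ _ (s_three_dvd_four_mul m _ _ _ _) ?_)
  simp only [Finset.forall_mem_insert, Finset.mem_singleton, forall_eq, Fin.sum_univ_seven]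
  refine ⟨?_, ?_, ?_⟩ <;> simp <;> ring

lemma hankel_step_four_mul_add_one (m : ℕ) :
    (-45 * (m : ℚ) - 45) * (hankel (catalanConv 8) (4 * m + 2) : ℚ) =
      (-256 * (m : ℚ) ^ 4 - 1024 * (m : ℚ) ^ 3 - 916 * (m : ℚ) ^ 2 + 666 * (m : ℚ) + 900) * hankel (catalanConv 8) (4 * m + 1) := by
  refine hankel_step (4 * m + 1)
    ![(-256 * (m : ℚ) ^ 4 - 1024 * (m : ℚ) ^ 3 - 916 * (m : ℚ) ^ 2 + 666 * (m : ℚ) + 900),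
      (-1024 * (m : ℚ) ^ 4 - 4096 * (m : ℚ) ^ 3 - 3904 * (m : ℚ) ^ 2 + 1824 * (m : ℚ) + 2880),
      (-1536 * (m : ℚ) ^ 4 - 6144 * (m : ℚ) ^ 3 - 5976 * (m : ℚ) ^ 2 + 2361 * (m : ℚ) + 4050),
      (-1024 * (m : ℚ) ^ 4 - 4096 * (m : ℚ) ^ 3 - 3904 * (m : ℚ) ^ 2 + 1824 * (m : ℚ) + 2880),
      (-256 * (m : ℚ) ^ 4 - 1024 * (m : ℚ) ^ 3 - 916 * (m : ℚ) ^ 2 + 666 * (m : ℚ) + 900),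
      0,
      (-45 * (m : ℚ) - 45)]
    (W_dvd _ _ (s_three_dvd_four_mul_add_one m _ _ _ _) ?_)
  simp only [Finset.forall_mem_insert, Finset.mem_singleton, forall_eq, Fin.sum_univ_seven]
  refine ⟨?_, ?_, ?_⟩ <;> simp <;> ring

lemma hankel_step_four_mul_add_two (m : ℕ) :
    (-64 * (m : ℚ) ^ 3 - 96 * (m : ℚ) ^ 2 + 43 * (m : ℚ) + 75) * (hankel (catalanConv 8) (4 * m + 3) : ℚ) =
      (64 * (m : ℚ) ^ 3 + 480 * (m : ℚ) ^ 2 + 1109 * (m : ℚ) + 810) * hankel (catalanConv 8) (4 * m + 2) := by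
  refine hankel_step (4 * m + 2)
    ![(64 * (m : ℚ) ^ 3 + 480 * (m : ℚ) ^ 2 + 1109 * (m : ℚ) + 810),
      (128 * (m : ℚ) ^ 3 + 960 * (m : ℚ) ^ 2 + 2158 * (m : ℚ) + 1500),
      (64 * (m : ℚ) ^ 3 + 480 * (m : ℚ) ^ 2 + 1109 * (m : ℚ) + 810),
      0,
      (-64 * (m : ℚ) ^ 3 - 96 * (m : ℚ) ^ 2 + 43 * (m : ℚ) + 75),
      (-128 * (m : ℚ) ^ 3 - 192 * (m : ℚ) ^ 2 + 146 * (m : ℚ) + 210),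
      (-64 * (m : ℚ) ^ 3 - 96 * (m : ℚ) ^ 2 + 43 * (m : ℚ) + 75)]
    (W_dvd _ _ (s_three_dvd_four_mul_add_two m _ _ _ _) ?_)
  simp only [Finset.forall_mem_insert, Finset.mem_singleton, forall_eq, Fin.sum_univ_seven]
  refine ⟨?_, ?_, ?_⟩ <;> simp <;> ring

lemma hankel_step_four_mul_add_three (m : ℕ) :
    (-256 * (m : ℚ) ^ 4 - 2048 * (m : ℚ) ^ 3 - 5524 * (m : ℚ) ^ 2 - 6162 * (m : ℚ) - 2430) * (hankel (catalanConv 8) (4 * m + 4) : ℚ) =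
      (45 * (m : ℚ) + 90) * hankel (catalanConv 8) (4 * m + 3) := by
  refine hankel_step (4 * m + 3)
    ![(45 * (m : ℚ) + 90),
      0,
      (-256 * (m : ℚ) ^ 4 - 2048 * (m : ℚ) ^ 3 - 5524 * (m : ℚ) ^ 2 - 6162 * (m : ℚ) - 2430),
      (-1024 * (m : ℚ) ^ 4 - 8192 * (m : ℚ) ^ 3 - 22336 * (m : ℚ) ^ 2 - 25248 * (m : ℚ) - 10080),
      (-1536 * (m : ℚ) ^ 4 - 12288 * (m : ℚ) ^ 3 - 33624 * (m : ℚ) ^ 2 - 38217 * (m : ℚ) - 15345),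
      (-1024 * (m : ℚ) ^ 4 - 8192 * (m : ℚ) ^ 3 - 22336 * (m : ℚ) ^ 2 - 25248 * (m : ℚ) - 10080),
      (-256 * (m : ℚ) ^ 4 - 2048 * (m : ℚ) ^ 3 - 5524 * (m : ℚ) ^ 2 - 6162 * (m : ℚ) - 2430)]
    (W_dvd _ _ (s_three_dvd_four_mul_add_three m _ _ _ _) ?_)
  simp only [Finset.forall_mem_insert, Finset.mem_singleton, forall_eq, Fin.sum_univ_seven]
  refine ⟨?_, ?_, ?_⟩ <;> simp <;> ring


end

/-- One period of the recursion: the value at `4n` determines the next four values. -/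
lemma hankel_period (n : ℕ) (h0 : (hankel (catalanConv 8) (4 * n) : ℚ) = (n + 1) ^ 3) :
    (hankel (catalanConv 8) (4 * n + 1) : ℚ) = (n + 1) ^ 3 ∧
    (hankel (catalanConv 8) (4 * n + 2) : ℚ) =
      2 / 45 * (n + 1) ^ 2 * (n + 2) * (2 * n + 3) * (64 * (n : ℚ) ^ 2 + 32 * n - 75) ∧
    (hankel (catalanConv 8) (4 * n + 3) : ℚ) =
      -(2 / 45) * (n + 1) * (n + 2) ^ 2 * (2 * n + 3) * (64 * (n : ℚ) ^ 2 + 352 * n + 405) ∧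
    (hankel (catalanConv 8) (4 * n + 4) : ℚ) = (n + 2) ^ 3 := by
  have hn : (n : ℚ) + 1 ≠ 0 := by positivity
  have hn2 : 64 * (n : ℚ) ^ 2 + 32 * n - 75 ≠ 0 := by
    -- the left-hand side is odd
    intro h
    have h' : 64 * (n : ℤ) ^ 2 + 32 * n - 75 = 0 := by exact_mod_cast h
    omega
  have hn3 : 64 * (n : ℚ) ^ 2 + 352 * n + 405 ≠ 0 := by positivity
  have h1 : (hankel (catalanConv 8) (4 * n + 1) : ℚ) = (n + 1) ^ 3 := by
    have := hankel_step_four_mul n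
    rw [h0] at this
    linarith
  have h2 : (hankel (catalanConv 8) (4 * n + 2) : ℚ) =
      2 / 45 * (n + 1) ^ 2 * (n + 2) * (2 * n + 3) * (64 * (n : ℚ) ^ 2 + 32 * n - 75) := by
    have := hankel_step_four_mul_add_one n
    rw [h1] at this
    apply mul_left_cancel₀ (mul_ne_zero (show (-45 : ℚ) ≠ 0 by norm_num) hn)
    linear_combination this
  have h3 : (hankel (catalanConv 8) (4 * n + 3) : ℚ) =
      -(2 / 45) * (n + 1) * (n + 2) ^ 2 * (2 * n + 3) * (64 * (n : ℚ) ^ 2 + 352 * n + 405) := by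
    have := hankel_step_four_mul_add_two n
    rw [h2] at this
    apply mul_left_cancel₀ (mul_ne_zero hn hn2)
    linear_combination -this
  refine ⟨h1, h2, h3, ?_⟩
  have := hankel_step_four_mul_add_three n
  rw [h3] at this
  have hn4 : (2 * (n : ℚ) + 3) ≠ 0 := by positivity
  apply mul_left_cancel₀ (mul_ne_zero (mul_ne_zero hn hn4) hn3)
  linear_combination -this / 2

theorem hankel_catalanConv_eight (n : ℕ) :
    (hankel (catalanConv 8) (4 * n) : ℚ) = (n + 1) ^ 3 ∧
    (hankel (catalanConv 8) (4 * n + 1) : ℚ) = (n + 1) ^ 3 ∧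
    (hankel (catalanConv 8) (4 * n + 2) : ℚ) =
      2 / 45 * (n + 1) ^ 2 * (n + 2) * (2 * n + 3) * (64 * (n : ℚ) ^ 2 + 32 * n - 75) ∧
    (hankel (catalanConv 8) (4 * n + 3) : ℚ) =
      -(2 / 45) * (n + 1) * (n + 2) ^ 2 * (2 * n + 3) * (64 * (n : ℚ) ^ 2 + 352 * n + 405) := by
  have h0 : (hankel (catalanConv 8) (4 * n) : ℚ) = (n + 1) ^ 3 := by
    induction n with
    | zero => simp [hankel]
    | succ n ih =>
      rw [show 4 * (n + 1) = 4 * n + 4 by ring, (hankel_period n ih).2.2.2]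
      push_cast
      ring
  exact ⟨h0, (hankel_period n h0).1, (hankel_period n h0).2.1, (hankel_period n h0).2.2.1⟩
end

section
/- For every natural number n: H_{2n}(G(x,2)) = (-1)^n and H_{2n+1}(G(x,2)) = (-1)^n. -/
/-- The sequence `a_k = binom(2k+r, k)`, whose generating function is
`G(x,r) = C(x)^r / √(1-4x)`. -/
def centralSeq (r : ℕ) (k : ℕ) : ℤ :=
  ((2 * k + r).choose k : ℤ)

/-- The coefficient of `p_i` in `x ^ k`. Writing it as `binom(2k+1, k+1+i)` instead of the equal
`binom(2k+1, k-i)` makes it vanish for `k < i` without truncated subtraction. -/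
def coef (k i : ℕ) : ℕ := (2 * k + 1).choose (k + 1 + i)

/-- The Gram matrix of the polynomials `p_i`. -/
def gram (n : ℕ) : Matrix (Fin n) (Fin n) ℤ :=
  Matrix.of fun i j =>
    (if i.val = 0 ∧ j.val = 0 then 1 else 0) + (if i.val + 1 = j.val then 1 else 0) +
      (if j.val + 1 = i.val then 1 else 0)

/-- The lower unitriangular matrix expressing the monomials in the polynomials `p_i`. -/
def coefMatrix (n : ℕ) : Matrix (Fin n) (Fin n) ℤ :=
  Matrix.of fun k i => (coef k.val i.val : ℤ)

lemma coef_eq_zero {k i : ℕ} (h : k < i) : coef k i = 0 :=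
  Nat.choose_eq_zero_of_lt (by omega)

lemma coef_self (k : ℕ) : coef k k = 1 := by
  rw [coef, show k + 1 + k = 2 * k + 1 by ring, Nat.choose_self]

lemma choose_eq_coef {k i a : ℕ} (h : a + i = k) : (2 * k + 1).choose a = coef k i := by
  rw [coef]
  exact Nat.choose_symm_of_eq_add (by omega)

/-- Vandermonde's convolution for `binom((2k+1) + (2l+1), k+l)`, with the terms `a ≤ k` (read
backwards) and `a > k` separated and each written through `coef`. -/
lemma vandermonde_split (k l : ℕ) :
    (2 * (k + l) + 2).choose (k + l) = coef k 0 * coef l 0 +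
      ∑ i ∈ Finset.range k, coef k (i + 1) * coef l i +
      ∑ i ∈ Finset.range l, coef k i * coef l (i + 1) := by
  rw [show 2 * (k + l) + 2 = (2 * k + 1) + (2 * l + 1) by ring, Nat.add_choose_eq,
    Finset.Nat.sum_antidiagonal_eq_sum_range_succ_mk,
    show (k + l).succ = (k + 1) + l by omega, Finset.sum_range_add,
    ← Finset.sum_range_reflect, Finset.sum_range_succ']
  congr 1
  · rw [add_comm]
    congr 1
    · simp only [Nat.add_sub_cancel, Nat.sub_zero, Nat.add_sub_cancel_left]
      rw [choose_eq_coef (k := k) (i := 0) rfl, choose_eq_coef (k := l) (i := 0) rfl]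
    · refine Finset.sum_congr rfl fun i hi => ?_
      have hi := Finset.mem_range.1 hi
      rw [choose_eq_coef (k := k) (i := i + 1) (by omega)]
      congr 1
      rw [coef]
      congr 1
      omega
  · refine Finset.sum_congr rfl fun i hi => ?_
    have hi := Finset.mem_range.1 hi
    rw [choose_eq_coef (k := l) (i := i + 1) (by dsimp only; omega)]
    rfl

/-- The sums in `vandermonde_split` may be extended, since the additional terms vanish. -/
lemma vandermonde_split_of_lt {k l n : ℕ} (hk : k < n) (hl : l < n) :
    (2 * (k + l) + 2).choose (k + l) = coef k 0 * coef l 0 +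
      ∑ i ∈ Finset.range n, coef k (i + 1) * coef l i +
      ∑ i ∈ Finset.range n, coef k i * coef l (i + 1) := by
  rw [vandermonde_split]
  congr 1
  · congr 1
    refine Finset.sum_subset (Finset.range_subset_range.2 hk.le) fun i _ hi => ?_
    rw [Finset.mem_range, not_lt] at hi
    rw [coef_eq_zero (k := k) (by omega), zero_mul]
  · refine Finset.sum_subset (Finset.range_subset_range.2 hl.le) fun i _ hi => ?_
    rw [Finset.mem_range, not_lt] at hi
    rw [coef_eq_zero (k := l) (by omega), mul_zero]

/-- A sum over `j < n` that selects `j = m` gives `f m` also when `m = n`, provided `f n = 0`. -/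
lemma sum_fin_ite {n m : ℕ} (f : ℕ → ℤ) (hm : m ≤ n) (hf : f n = 0) :
    ∑ j : Fin n, (if m = j.val then f j.val else 0) = f m := by
  rw [Fin.sum_univ_eq_sum_range (fun j => if m = j then f j else 0) n, Finset.sum_ite_eq]
  split_ifs with h
  · rfl
  · rw [Finset.mem_range] at h
    rw [show m = n by omega, hf]

lemma hankel_factorization (n : ℕ) :
    (Matrix.of fun i j : Fin n => centralSeq 2 (i.val + j.val)) =
      coefMatrix n * gram n * (coefMatrix n).transpose := by
  ext k l
  have hk0 : (coef k n : ℤ) = 0 := by rw [coef_eq_zero k.isLt]; rfl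
  have hl0 : (coef l n : ℤ) = 0 := by rw [coef_eq_zero l.isLt]; rfl
  have hn : 0 ≤ n := Nat.zero_le n
  have h1 : ∑ i : Fin n, ∑ j : Fin n,
      (if i.val = 0 ∧ j.val = 0 then (coef k i : ℤ) * coef l j else 0) = coef k 0 * coef l 0 := by
    rw [← sum_fin_ite (fun i => (coef k i : ℤ) * coef l 0) hn (by simp [hk0])]
    refine Finset.sum_congr rfl fun i _ => ?_
    by_cases hi : i.val = 0
    · rw [if_pos hi.symm, ← sum_fin_ite (fun j => (coef k i : ℤ) * coef l j) hn (by simp [hl0])]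
      simp [hi, eq_comm]
    · simp [hi, eq_comm]
  have h2 : ∑ i : Fin n, ∑ j : Fin n,
      (if i.val + 1 = j.val then (coef k i : ℤ) * coef l j else 0) =
        ∑ i ∈ Finset.range n, (coef k i : ℤ) * coef l (i + 1) := by
    rw [← Fin.sum_univ_eq_sum_range (fun i => (coef k i : ℤ) * coef l (i + 1))]
    exact Finset.sum_congr rfl fun i _ =>
      sum_fin_ite (fun j => (coef k i : ℤ) * coef l j) i.isLt (by simp [hl0])
  have h3 : ∑ i : Fin n, ∑ j : Fin n,
      (if j.val + 1 = i.val then (coef k i : ℤ) * coef l j else 0) =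
        ∑ i ∈ Finset.range n, (coef k (i + 1) : ℤ) * coef l i := by
    rw [Finset.sum_comm, ← Fin.sum_univ_eq_sum_range (fun i => (coef k (i + 1) : ℤ) * coef l i)]
    exact Finset.sum_congr rfl fun j _ =>
      sum_fin_ite (fun i => (coef k i : ℤ) * coef l j) j.isLt (by simp [hk0])
  have hV : centralSeq 2 (k.val + l.val) = (coef k 0 : ℤ) * coef l 0 +
      ∑ i ∈ Finset.range n, (coef k (i + 1) : ℤ) * coef l i +
      ∑ i ∈ Finset.range n, (coef k i : ℤ) * coef l (i + 1) := by
    rw [centralSeq, vandermonde_split_of_lt k.isLt l.isLt]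
    push_cast
    rfl
  rw [Matrix.of_apply, hV, ← h1, ← h2, ← h3, ← Finset.sum_add_distrib, ← Finset.sum_add_distrib]
  simp only [← Finset.sum_add_distrib, Matrix.mul_apply, Matrix.transpose_apply, Finset.sum_mul]
  rw [Finset.sum_comm]
  refine Finset.sum_congr rfl fun j _ => Finset.sum_congr rfl fun i _ => ?_
  simp only [coefMatrix, gram, Matrix.of_apply]
  split_ifs <;> ring

lemma det_coefMatrix (n : ℕ) : (coefMatrix n).det = 1 := by
  rw [Matrix.det_of_isLowerTriangular]
  · simp [coefMatrix, coef_self]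
  · intro i j hij
    have hij : i.val < j.val := hij
    simp [coefMatrix, coef_eq_zero hij]

/-- The last row and the last column of `gram (n + 2)` each have a single nonzero entry, a one
next to the corner. -/
lemma det_gram_add_two (n : ℕ) : (gram (n + 2)).det = -(gram n).det := by
  rw [Matrix.det_succ_row _ (Fin.last (n + 1)), Fin.sum_univ_castSucc, Fin.sum_univ_castSucc]
  have h0 : ∀ i : Fin n, gram (n + 2) (Fin.last (n + 1)) i.castSucc.castSucc = 0 := by
    intro i
    have := i.isLt
    simp [gram]
    omega
  have h1 : gram (n + 2) (Fin.last (n + 1)) (Fin.last n).castSucc = 1 := by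
    simp [gram]
    omega
  have h2 : gram (n + 2) (Fin.last (n + 1)) (Fin.last (n + 1)) = 0 := by
    simp [gram]
  simp only [h0, h1, h2, mul_zero, zero_mul, Finset.sum_const_zero, zero_add, add_zero, mul_one]
  rw [Matrix.det_succ_column _ (Fin.last n), Fin.sum_univ_castSucc]
  have hc : (Fin.last n).castSucc.succAbove (Fin.last n) = Fin.last (n + 1) := by
    simp [Fin.succAbove]
  have h3 : ∀ i : Fin n, gram (n + 2) i.castSucc.castSucc (Fin.last (n + 1)) = 0 := by
    intro i
    have := i.isLt
    simp [gram]
    omega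
  have h4 : gram (n + 2) (Fin.last n).castSucc (Fin.last (n + 1)) = 1 := by
    simp [gram]
    omega
  have hm : (((gram (n + 2)).submatrix Fin.castSucc
      (Fin.last n).castSucc.succAbove).submatrix Fin.castSucc Fin.castSucc) =
      gram n := by
    ext i j
    have hj : (Fin.last n).castSucc.succAbove j.castSucc = j.castSucc.castSucc := by
      simp [Fin.succAbove, Fin.lt_def]
    simp only [Matrix.submatrix_apply, hj, gram, Matrix.of_apply, Fin.val_castSucc]
  simp only [Matrix.submatrix_apply, Fin.succAbove_last, hc, h3, h4, mul_zero, zero_mul,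
    Finset.sum_const_zero, zero_add, mul_one]
  rw [hm]
  simp only [Fin.val_last, Fin.val_castSucc]
  rw [← mul_assoc, ← pow_add, Odd.neg_one_pow ⟨2 * n, by ring⟩, neg_one_mul]

lemma hankel_eq_det_gram (n : ℕ) : hankel (centralSeq 2) n = (gram n).det := by
  rw [hankel, hankel_factorization, Matrix.det_mul, Matrix.det_mul, Matrix.det_transpose,
    det_coefMatrix, one_mul, mul_one]

theorem hankel_centralSeq_two (n : ℕ) :
    hankel (centralSeq 2) (2 * n) = (-1) ^ n ∧
    hankel (centralSeq 2) (2 * n + 1) = (-1) ^ n := by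
  rw [hankel_eq_det_gram, hankel_eq_det_gram]
  induction n with
  | zero => exact ⟨by simp, by simp [gram]⟩
  | succ n ih =>
    rw [show 2 * (n + 1) = 2 * n + 2 by ring, show 2 * n + 2 + 1 = 2 * n + 1 + 2 by ring,
      det_gram_add_two, det_gram_add_two, ih.1, ih.2, pow_succ]
    exact ⟨by ring, by ring⟩
end

section
/- For every natural number n: H_{3n}(G(x,3)) = 2n+1, H_{3n+1}(G(x,3)) = 2n+1, and H_{3n+2}(G(x,3)) = −4(n+1). -/
namespace HankelThree

/-! ### Tableaux with a three-term recurrence -/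

section Stieltjes

variable {B : ℕ → ℕ → ℚ} {s D : ℕ → ℚ}

/-- Discrete Green (Christoffel–Darboux) identity: the tridiagonal operator of the recurrence is
self-adjoint for the weights `D`, up to a boundary term. -/
lemma stieltjes_green (hD : ∀ k, D k ≠ 0)
    (h0 : ∀ i, B (i + 1) 0 = s 0 * B i 0 + D 1 / D 0 * B i 1)
    (hs : ∀ i k, B (i + 1) (k + 1) =
      B i k + s (k + 1) * B i (k + 1) + D (k + 2) / D (k + 1) * B i (k + 2))
    (i j N : ℕ) :
    ∑ k ∈ Finset.range (N + 1), B (i + 1) k * D k * B j k =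
      ∑ k ∈ Finset.range (N + 1), B i k * D k * B (j + 1) k +
        D (N + 1) * (B i (N + 1) * B j N - B j (N + 1) * B i N) := by
  induction N with
  | zero =>
    have := hD 0
    simp only [zero_add, Finset.sum_range_one, h0]
    field_simp
    ring
  | succ N ih =>
    have := hD (N + 1)
    rw [Finset.sum_range_succ, ih, Finset.sum_range_succ _ (N + 1), hs, hs]
    field_simp
    ring

lemma stieltjes_vanish
    (hB : ∀ k, B 0 k = if k = 0 then 1 else 0)
    (hs : ∀ i k, B (i + 1) (k + 1) =
      B i k + s (k + 1) * B i (k + 1) + D (k + 2) / D (k + 1) * B i (k + 2))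
    (i : ℕ) : ∀ k, i < k → B i k = 0 := by
  induction i with
  | zero => intro k hk; rw [hB, if_neg (by omega)]
  | succ i ih =>
    rintro (_ | k) hk
    · omega
    · rw [hs, ih k (by omega), ih (k + 1) (by omega), ih (k + 2) (by omega)]; ring

lemma stieltjes_diag
    (hB : ∀ k, B 0 k = if k = 0 then 1 else 0)
    (hs : ∀ i k, B (i + 1) (k + 1) =
      B i k + s (k + 1) * B i (k + 1) + D (k + 2) / D (k + 1) * B i (k + 2))
    (i : ℕ) : B i i = 1 := by
  induction i with
  | zero => simp [hB]
  | succ i ih =>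
    rw [hs, ih, stieltjes_vanish hB hs i (i + 1) (by omega),
      stieltjes_vanish hB hs i (i + 2) (by omega)]
    ring

lemma stieltjes_gram (hD : ∀ k, D k ≠ 0) (hD0 : D 0 = 1)
    (hB : ∀ k, B 0 k = if k = 0 then 1 else 0)
    (h0 : ∀ i, B (i + 1) 0 = s 0 * B i 0 + D 1 / D 0 * B i 1)
    (hs : ∀ i k, B (i + 1) (k + 1) =
      B i k + s (k + 1) * B i (k + 1) + D (k + 2) / D (k + 1) * B i (k + 2))
    (N i : ℕ) (hi : i ≤ N) (j : ℕ) :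
    ∑ k ∈ Finset.range (N + 1), B i k * D k * B j k = B (i + j) 0 := by
  induction i generalizing j with
  | zero => simp [hB, hD0]
  | succ i ih =>
    -- The boundary term vanishes because row `i` is supported on `k ≤ i < N`.
    rw [stieltjes_green hD h0 hs, ih (by omega),
      stieltjes_vanish hB hs i N (by omega), stieltjes_vanish hB hs i (N + 1) (by omega)]
    rw [show i + (j + 1) = i + 1 + j by omega]
    ring

/-- The Hankel determinant of the moment sequence `B · 0` is the product of the weights. -/
lemma stieltjes_hankel (hD : ∀ k, D k ≠ 0) (hD0 : D 0 = 1)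
    (hB : ∀ k, B 0 k = if k = 0 then 1 else 0)
    (h0 : ∀ i, B (i + 1) 0 = s 0 * B i 0 + D 1 / D 0 * B i 1)
    (hs : ∀ i k, B (i + 1) (k + 1) =
      B i k + s (k + 1) * B i (k + 1) + D (k + 2) / D (k + 1) * B i (k + 2))
    (a : ℕ → ℤ) (ha : ∀ i, (a i : ℚ) = B i 0) (n : ℕ) :
    (hankel a n : ℚ) = ∏ k ∈ Finset.range n, D k := by
  let L : Matrix (Fin n) (Fin n) ℚ := Matrix.of fun i k => B i.val k.val
  have hL : L.det = 1 := by
    rw [Matrix.det_of_isLowerTriangular L]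
    · exact Finset.prod_eq_one fun i _ => stieltjes_diag hB hs i.val
    · intro i k hik
      exact stieltjes_vanish hB hs i.val k.val hik
  have key : (Matrix.of fun i j : Fin n => a (i.val + j.val)).map (Int.castRingHom ℚ) =
      L * Matrix.diagonal (fun k : Fin n => D k.val) * L.transpose := by
    ext i j
    obtain ⟨N, rfl⟩ : ∃ N, n = N + 1 := ⟨n - 1, by have := i.isLt; omega⟩
    rw [Matrix.mul_apply]
    simp only [Matrix.mul_diagonal, Matrix.transpose_apply, Matrix.map_apply, Matrix.of_apply, L]
    rw [Fin.sum_univ_eq_sum_range (fun k => B i.val k * D k * B j.val k) (N + 1),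
      stieltjes_gram hD hD0 hB h0 hs N i.val (by have := i.isLt; omega) j.val, ← ha]
    simp
  have hdet : (hankel a n : ℚ) =
      ((Matrix.of fun i j : Fin n => a (i.val + j.val)).map (Int.castRingHom ℚ)).det := by
    rw [hankel, ← RingHom.mapMatrix_apply, ← RingHom.map_det]
    simp
  rw [hdet, key, Matrix.det_mul, Matrix.det_mul, Matrix.det_transpose, hL, Matrix.det_diagonal,
    Fin.prod_univ_eq_prod_range (fun k => D k) n]
  ring

end Stieltjes

/-! ### The tableau for `binom(2k+3, k)` -/

/-- The coefficients of `(2 + z + 1/z)^i` in the basis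
`(z^(k+1/2) + z^(-k-1/2)) / (z^(1/2) + z^(-1/2))`. -/
def c (i k : ℕ) : ℚ := ((2 * i + 1).choose (i + 1 + k) : ℚ)

lemma c_zero (k : ℕ) : c 0 k = if k = 0 then 1 else 0 := by
  rcases k with _ | k
  · simp [c]
  · have : Nat.choose 1 (1 + (k + 1)) = 0 := Nat.choose_eq_zero_of_lt (by omega)
    simp [c, this]

lemma c_succ_zero (i : ℕ) : c (i + 1) 0 = 3 * c i 0 + c i 1 := by
  have h1 : (2 * i + 3).choose (i + 2) = (2 * i + 1).choose i + 2 * (2 * i + 1).choose (i + 1)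
      + (2 * i + 1).choose (i + 2) := by
    simp only [Nat.choose_succ_succ']; ring
  have h2 := Nat.choose_symm_half i
  have h3 : (2 * i + 3).choose (i + 2) = 3 * (2 * i + 1).choose (i + 1)
      + (2 * i + 1).choose (i + 2) := by omega
  simp only [c, show 2 * (i + 1) + 1 = 2 * i + 3 by ring, add_zero, add_assoc, Nat.reduceAdd]
  exact_mod_cast h3

lemma c_succ_succ (i k : ℕ) : c (i + 1) (k + 1) = c i k + 2 * c i (k + 1) + c i (k + 2) := by
  have h : (2 * i + 3).choose (i + k + 3) = (2 * i + 1).choose (i + k + 1)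
      + 2 * (2 * i + 1).choose (i + k + 2) + (2 * i + 1).choose (i + k + 3) := by
    simp only [Nat.choose_succ_succ']; ring
  simp only [c, show 2 * (i + 1) + 1 = 2 * i + 3 by ring,
    show i + 1 + 1 + (k + 1) = i + k + 3 by ring, show i + 1 + k = i + k + 1 by ring,
    show i + 1 + (k + 1) = i + k + 2 by ring, show i + 1 + (k + 2) = i + k + 3 by ring]
  exact_mod_cast h

/-- The weights: squared norms of the monic orthogonal polynomials, equal to the ratios of
consecutive Hankel determinants. -/
def D (k : ℕ) : ℚ :=
  if k % 3 = 0 then 1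
  else if k % 3 = 1 then -(4 * ((k / 3 : ℕ) + 1)) / (2 * (k / 3 : ℕ) + 1)
  else -(2 * (k / 3 : ℕ) + 3) / (4 * ((k / 3 : ℕ) + 1))

/-- The first subdiagonal of the change of basis from the orthogonal polynomials to the basis
behind `c`; the second subdiagonal is `1 / D k`. -/
def e (k : ℕ) : ℚ :=
  if k % 3 = 0 then 2
  else if k % 3 = 1 then (2 * (k / 3 : ℕ) + 1) / (4 * ((k / 3 : ℕ) + 1))
  else -1

/-- The diagonal coefficients of the three-term recurrence. -/
def s : ℕ → ℚ
  | 0 => 5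
  | k + 1 => 2 + e (k + 1) - e k

/-- The Stieltjes tableau, given by the coefficients of the `i`-th power of the variable in the
orthogonal polynomials. -/
def B (i k : ℕ) : ℚ := c i k + e k * c i (k + 1) + 1 / D k * c i (k + 2)

lemma D_mod0 (n : ℕ) : D (3 * n) = 1 := by simp [D]

lemma D_mod1 (n : ℕ) : D (3 * n + 1) = -(4 * ((n : ℚ) + 1)) / (2 * n + 1) := by
  simp [D, show (3 * n + 1) % 3 = 1 by omega, show (3 * n + 1) / 3 = n by omega]

lemma D_mod2 (n : ℕ) : D (3 * n + 2) = -(2 * (n : ℚ) + 3) / (4 * (n + 1)) := by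
  simp [D, show (3 * n + 2) % 3 = 2 by omega, show (3 * n + 2) / 3 = n by omega]

lemma e_mod0 (n : ℕ) : e (3 * n) = 2 := by simp [e]

lemma e_mod1 (n : ℕ) : e (3 * n + 1) = (2 * (n : ℚ) + 1) / (4 * (n + 1)) := by
  simp [e, show (3 * n + 1) % 3 = 1 by omega, show (3 * n + 1) / 3 = n by omega]

lemma e_mod2 (n : ℕ) : e (3 * n + 2) = -1 := by
  simp [e, show (3 * n + 2) % 3 = 2 by omega]

lemma exists_mod3 (k : ℕ) : ∃ n, k = 3 * n ∨ k = 3 * n + 1 ∨ k = 3 * n + 2 :=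
  ⟨k / 3, by omega⟩

lemma D_ne (k : ℕ) : D k ≠ 0 := by
  obtain ⟨n, rfl | rfl | rfl⟩ := exists_mod3 k
  · simp [D_mod0]
  · have h1 : (n : ℚ) + 1 ≠ 0 := by positivity
    have h2 : 2 * (n : ℚ) + 1 ≠ 0 := by positivity
    rw [D_mod1]
    exact div_ne_zero (neg_ne_zero.2 (mul_ne_zero (by norm_num) h1)) h2
  · have h1 : (n : ℚ) + 1 ≠ 0 := by positivity
    have h2 : 2 * (n : ℚ) + 3 ≠ 0 := by positivity
    rw [D_mod2]
    exact div_ne_zero (neg_ne_zero.2 h2) (mul_ne_zero (by norm_num) h1)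

/-- Comparison of the coefficients of `c i (k+2)` in the three-term recurrence. -/
lemma coeff_one (k : ℕ) : 1 + 2 * e (k + 1) + 1 / D (k + 1) =
    D (k + 2) / D (k + 1) + e (k + 1) * s (k + 1) + 1 / D k := by
  obtain ⟨n, rfl | rfl | rfl⟩ := exists_mod3 k <;>
  have h1 : (n : ℚ) + 1 ≠ 0 := by positivity
  all_goals
    have h2 : 2 * (n : ℚ) + 1 ≠ 0 := by positivity
    have h3 : 2 * (n : ℚ) + 3 ≠ 0 := by positivity
  · rw [s, D_mod0, D_mod1, D_mod2, e_mod0, e_mod1]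
    field_simp
    ring
  · rw [s, D_mod1, show 3 * n + 1 + 1 = 3 * n + 2 by ring,
      show 3 * n + 1 + 2 = 3 * (n + 1) by ring, D_mod0, D_mod2, e_mod2, e_mod1]
    field_simp
    ring
  · rw [s, D_mod2, show 3 * n + 2 + 1 = 3 * (n + 1) by ring,
      show 3 * n + 2 + 2 = 3 * (n + 1) + 1 by ring, D_mod0, D_mod1, e_mod0, e_mod2]
    push_cast
    have h4 : 2 * ((n : ℚ) + 1) + 1 ≠ 0 := by positivity
    field_simp
    ring

/-- Comparison of the coefficients of `c i (k+3)` in the three-term recurrence. -/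
lemma coeff_two (k : ℕ) : e (k + 1) + 2 * (1 / D (k + 1)) =
    e (k + 2) * (D (k + 2) / D (k + 1)) + 1 / D (k + 1) * s (k + 1) := by
  obtain ⟨n, rfl | rfl | rfl⟩ := exists_mod3 k <;>
  have h1 : (n : ℚ) + 1 ≠ 0 := by positivity
  all_goals
    have h2 : 2 * (n : ℚ) + 1 ≠ 0 := by positivity
    have h3 : 2 * (n : ℚ) + 3 ≠ 0 := by positivity
  · rw [s, D_mod1, D_mod2, e_mod0, e_mod1, e_mod2]
    field_simp
    ring
  · rw [s, show 3 * n + 1 + 1 = 3 * n + 2 by ring,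
      show 3 * n + 1 + 2 = 3 * (n + 1) by ring, D_mod0, D_mod2, e_mod2, e_mod1, e_mod0]
    field_simp
    ring
  · rw [s, show 3 * n + 2 + 1 = 3 * (n + 1) by ring,
      show 3 * n + 2 + 2 = 3 * (n + 1) + 1 by ring, D_mod0, D_mod1, e_mod0, e_mod2, e_mod1]
    push_cast
    have h4 : 2 * ((n : ℚ) + 1) + 1 ≠ 0 := by positivity
    have h5 : (n : ℚ) + 1 + 1 ≠ 0 := by positivity
    field_simp
    ring

lemma B_row_zero (k : ℕ) : B 0 k = if k = 0 then 1 else 0 := by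
  simp [B, c_zero]

lemma D_zero : D 0 = 1 := D_mod0 0

lemma D_one : D 1 = -4 := by simp [D]

lemma B_succ_zero (i : ℕ) : B (i + 1) 0 = s 0 * B i 0 + D 1 / D 0 * B i 1 := by
  have h1 : e 0 = 2 := e_mod0 0
  have h2 : e 1 = 1 / 4 := by simp [e]
  simp only [B, zero_add, D_zero, D_one, h1, h2, s, c_succ_zero,
    show c (i + 1) 1 = c i 0 + 2 * c i 1 + c i 2 from c_succ_succ i 0,
    show c (i + 1) 2 = c i 1 + 2 * c i 2 + c i 3 from c_succ_succ i 1,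
    show 1 + 1 = 2 from rfl, show 1 + 2 = 3 from rfl]
  ring

lemma B_succ_succ (i k : ℕ) : B (i + 1) (k + 1) =
    B i k + s (k + 1) * B i (k + 1) + D (k + 2) / D (k + 1) * B i (k + 2) := by
  have h1 := coeff_one k
  have h2 := coeff_two k
  have h3 : 2 + e (k + 1) = e k + s (k + 1) := by rw [s]; ring
  have h4 : 1 / D (k + 1) = 1 / D (k + 2) * (D (k + 2) / D (k + 1)) := by
    have := D_ne (k + 1)
    have := D_ne (k + 2)
    field_simp
  simp only [B, c_succ_succ, add_assoc, Nat.reduceAdd] at *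
  linear_combination h3 * c i (k + 1) + h1 * c i (k + 2) + h2 * c i (k + 3) + h4 * c i (k + 4)

lemma B_column_zero (i : ℕ) : (centralSeq 3 i : ℚ) = B i 0 := by
  have h : (2 * i + 3).choose i = (2 * i + 1).choose (i + 1) + 2 * (2 * i + 1).choose (i + 2)
      + (2 * i + 1).choose (i + 3) := by
    rw [← Nat.choose_symm_of_eq_add (show 2 * i + 3 = (i + 3) + i by ring)]
    simp only [Nat.choose_succ_succ']; ring
  have h1 : e 0 = 2 := e_mod0 0
  rw [centralSeq, h]
  simp only [B, c, h1, D_zero, add_assoc, Nat.reduceAdd]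
  push_cast
  ring

lemma hankel_eq_prod (n : ℕ) : (hankel (centralSeq 3) n : ℚ) = ∏ k ∈ Finset.range n, D k :=
  stieltjes_hankel D_ne D_zero B_row_zero B_succ_zero B_succ_succ _ B_column_zero n

lemma prod_D (n : ℕ) : ∏ k ∈ Finset.range (3 * n), D k = 2 * n + 1 := by
  induction n with
  | zero => simp
  | succ n ih =>
    have h1 : (n : ℚ) + 1 ≠ 0 := by positivity
    have h2 : 2 * (n : ℚ) + 1 ≠ 0 := by positivity
    rw [show 3 * (n + 1) = 3 * n + 2 + 1 by ring, Finset.prod_range_succ, Finset.prod_range_succ,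
      Finset.prod_range_succ, ih, D_mod0, D_mod1, D_mod2]
    push_cast
    field_simp
    ring

end HankelThree

open HankelThree in
theorem hankel_centralSeq_three (n : ℕ) :
    hankel (centralSeq 3) (3 * n) = 2 * n + 1 ∧
    hankel (centralSeq 3) (3 * n + 1) = 2 * n + 1 ∧
    hankel (centralSeq 3) (3 * n + 2) = -4 * (n + 1) := by
  have h0 := hankel_eq_prod (3 * n)
  have h1 := hankel_eq_prod (3 * n + 1)
  have h2 := hankel_eq_prod (3 * n + 2)
  rw [prod_D] at h0
  rw [Finset.prod_range_succ, prod_D, D_mod0, mul_one] at h1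
  rw [Finset.prod_range_succ, Finset.prod_range_succ, prod_D, D_mod0, D_mod1] at h2
  have h3 : (hankel (centralSeq 3) (3 * n + 2) : ℚ) = -4 * (n + 1) := by
    have : 2 * (n : ℚ) + 1 ≠ 0 := by positivity
    rw [h2]
    field_simp
  exact ⟨by exact_mod_cast h0, by exact_mod_cast h1, by exact_mod_cast h3⟩
end
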